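/- arXiv:2102.13219 — 2 statements merged into one kernel-verified Lean document; each statement's English description precedes it below -/
import Mathlib

section
/- Fix integers m ≥ 1 and ℓ ≥ 4m. Let σ : ℝ → ℝ be an activation function such that |σ(x)| ≤ c₀·exp(c₁x²/(8m)) for some constants c₀ > 0 and 0 < c₁ < 1. Define φ_{>ℓ}(x) = σ(x) − Σ_{k=0}^{ℓ} (μ_k(σ)/k!)·He_k(x), where μ_k(σ) = E_{G~N(0,1)}[σ(G)He_k(G)]. Let g ~ N(0, I_d), w ~ Unif(S^{d−1}(1)) independent, and let L be the d×d cyclic shift matrix. Then E_{g,w}[ ( (1/d) Σ_{i=0}^{d−1} φ_{>ℓ}(⟨g, Lⁱw⟩) )^{2m} ]^{1/(2m)} = O_d(d^{−1/2}), i.e., there exist C < ∞ and d₀ such that the left-hand side is at most C·d^{−1/2} for all d ≥ d₀. -/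
open MeasureTheory ProbabilityTheory

/-- The standard Gaussian measure `N(0, I_d)` on `ℝ^d`. -/
noncomputable def stdGaussian (d : ℕ) : Measure (Fin d → ℝ) :=
  Measure.pi fun _ => gaussianReal 0 1

/-- `μ` is the uniform probability measure on the sphere of radius `r` in `ℝ^d`. -/
def IsUniformOnSphere (d : ℕ) (r : ℝ) (μ : Measure (Fin d → ℝ)) : Prop :=
  IsProbabilityMeasure μ ∧
  μ {x | ∑ i, x i ^ 2 ≠ r ^ 2} = 0 ∧
  ∀ T : (Fin d → ℝ) →ₗ[ℝ] (Fin d → ℝ),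
    (∀ x y : Fin d → ℝ, ∑ i, T x i * T y i = ∑ i, x i * y i) →
    Measure.map T μ = μ

/-- The `k`-th probabilists' Hermite polynomial, evaluated at a real number. -/
noncomputable def HePoly (k : ℕ) (x : ℝ) : ℝ :=
  Polynomial.aeval x (Polynomial.hermite k)

/-- `μ_k(σ) = E_{G~N(0,1)}[σ(G) He_k(G)]`, the `k`-th Hermite coefficient of `σ`. -/
noncomputable def hermiteCoeff (σ : ℝ → ℝ) (k : ℕ) : ℝ :=
  ∫ x, σ x * HePoly k x ∂(gaussianReal 0 1)

/-- `φ_{>ℓ}(x) = σ(x) − ∑_{k=0}^ℓ (μ_k(σ)/k!) He_k(x)`, the projection of `σ` orthogonal to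
polynomials of degree `≤ ℓ` with respect to the Gaussian measure. -/
noncomputable def phiGt (σ : ℝ → ℝ) (ℓ : ℕ) (x : ℝ) : ℝ :=
  σ x - ∑ k ∈ Finset.range (ℓ + 1), hermiteCoeff σ k / (Nat.factorial k) * HePoly k x

/-!
Expanding the `2m`-th power gives `d ^ (-2m)` times a sum over tuples `f : Fin (2m) → Fin d` of
`E ∏ φ ⟪g, L^{f s} w⟫` with `φ = φ_{>ℓ}`, and it suffices to bound this sum by `C d ^ m`.

* At most `C d ^ m` tuples have every index repeated (`card_no_isolated_le`), and each contributes
  `O(1)`: a product of `2m` factors is dominated by the sum of their `2m`-th powers, which are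
  integrable by the growth hypothesis.

* Suppose an index of the tuple occurs once. For fixed `w` the shifts are unit vectors. If their
  mutual inner products are small, the isolated vector is `r z + s e`, with `e` orthogonal to the
  other vectors and `r` of the order of these inner products (`exists_orthogonal_decomposition`).
  Averaging over the component of `g` along `e` replaces the isolated factor by the Gaussian
  smoothing `E_ξ φ (r x + s ξ)`. After a change of variables the Gaussian density is multiplied by
  `exp T`, where `T` is quadratic in the integration variable and of size `O(r)`; as `φ` is
  orthogonal to polynomials of degree `4m ≤ ℓ`, the first `2m` Taylor terms of `exp T` drop out and
  the smoothing is `O(r ^ (2m))` (`smoothing_bound`). If some inner product is not small, the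
  trivial bound suffices. In both cases the Gaussian mean is at most a constant times the sum of
  the `2m`-th powers of the off-diagonal inner products (`abs_integral_prod_le_offDiag`).

* These inner products are the autocorrelations `∑ j, w j * w (j + k)` with `k ≠ 0`, whose `2m`-th
  moment is `O(d ^ (-m))` (`IsUniformOnSphere.integral_autocorrelation_pow_le`): expand again,
  discard by a sign flip the terms in which a coordinate occurs once, count the remaining ones, and
  use `E w_i ^ (4m) = O(d ^ (-2m))`.

The `O(d ^ (2m))` tuples with an isolated index thus contribute `O(d ^ (2m) d ^ (-m))` as well.
-/

open scoped RealInnerProductSpace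

/-! ### Hermite polynomials and Gaussian integrals -/

open Polynomial in
lemma integrable_exp_sq_gaussian {c : ℝ} (hc : c < 1 / 2) :
    Integrable (fun x : ℝ => Real.exp (c * x ^ 2)) (gaussianReal 0 1) := by
  rw [gaussianReal_of_var_ne_zero _ one_ne_zero, integrable_withDensity_iff_integrable_smul']
  · have := (integrable_exp_neg_mul_sq (b := 1 / 2 - c) (by linarith)).const_mul
      ((√(2 * Real.pi * 1))⁻¹)
    refine this.congr (ae_of_all _ fun x => ?_)
    simp only [toReal_gaussianPDF, gaussianPDFReal, smul_eq_mul, NNReal.coe_one, mul_assoc]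
    rw [← Real.exp_add]
    congr 2
    ring
  · exact measurable_gaussianPDF 0 1
  · exact ae_of_all _ fun x => gaussianPDF_lt_top

lemma pow_le_factorial_mul_exp {x : ℝ} (hx : 0 ≤ x) (n : ℕ) :
    x ^ n ≤ n.factorial * Real.exp x := by
  have := Real.pow_div_factorial_le_exp x hx n
  rwa [div_le_iff₀ (by positivity), mul_comm] at this

open Polynomial in
/-- Polynomials grow slower than any Gaussian exponential. -/
lemma exists_poly_le_exp_sq (p : ℝ[X]) {b : ℝ} (hb : 0 < b) :
    ∃ A : ℝ, 0 ≤ A ∧ ∀ x : ℝ, |p.eval x| ≤ A * Real.exp (b * x ^ 2) := by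
  induction p using Polynomial.induction_on' with
  | add p q hp hq =>
    obtain ⟨A, hA, h1⟩ := hp
    obtain ⟨B, hB, h2⟩ := hq
    refine ⟨A + B, by positivity, fun x => ?_⟩
    rw [eval_add, add_mul]
    exact (abs_add_le _ _).trans (add_le_add (h1 x) (h2 x))
  | monomial n a =>
    refine ⟨|a| * (1 + n.factorial * (1 / b) ^ n), by positivity, fun x => ?_⟩
    have h1 : |x| ^ n ≤ 1 + (x ^ 2) ^ n := by
      rcases le_total |x| 1 with h | h
      · exact (pow_le_one₀ (abs_nonneg x) h).trans (le_add_of_nonneg_right (by positivity))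
      · have : |x| ^ n ≤ (|x| ^ 2) ^ n := by
          rw [← pow_mul]; exact pow_le_pow_right₀ h (by omega)
        rw [sq_abs] at this
        linarith
    have h2 : (x ^ 2) ^ n ≤ (1 / b) ^ n * (n.factorial * Real.exp (b * x ^ 2)) := by
      have := pow_le_factorial_mul_exp (x := b * x ^ 2) (by positivity) n
      calc (x ^ 2) ^ n = (1 / b) ^ n * (b * x ^ 2) ^ n := by
            rw [← mul_pow]; congr 1; field_simp
        _ ≤ _ := by gcongr
    have h3 : 1 ≤ Real.exp (b * x ^ 2) := Real.one_le_exp (by positivity)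
    rw [eval_monomial, abs_mul, abs_pow, mul_assoc]
    gcongr
    calc |x| ^ n ≤ 1 + (x ^ 2) ^ n := h1
      _ ≤ Real.exp (b * x ^ 2) + (1 / b) ^ n * (n.factorial * Real.exp (b * x ^ 2)) := by gcongr
      _ = _ := by ring

/-- Measurable functions of subcritical Gaussian growth are integrable. -/
lemma integrable_of_le_exp_sq {f : ℝ → ℝ} (hf : Measurable f) {A c : ℝ} (hc : c < 1 / 2)
    (h : ∀ x, |f x| ≤ A * Real.exp (c * x ^ 2)) : Integrable f (gaussianReal 0 1) :=
  ((integrable_exp_sq_gaussian hc).const_mul A).mono' hf.aestronglyMeasurable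
    (ae_of_all _ h)

open Polynomial in
lemma integrable_poly_gaussian (p : ℝ[X]) :
    Integrable (fun x => p.eval x) (gaussianReal 0 1) := by
  obtain ⟨A, -, h⟩ := exists_poly_le_exp_sq p (b := 1 / 4) (by norm_num)
  exact integrable_of_le_exp_sq (by fun_prop) (by norm_num) h

open Polynomial in
/-- Gaussian integration by parts for polynomials. -/
lemma stein_poly (p : ℝ[X]) :
    ∫ x, (X * p).eval x ∂(gaussianReal 0 1) = ∫ x, p.derivative.eval x ∂(gaussianReal 0 1) := by
  have hint : ∀ q : ℝ[X], Integrable (fun x => gaussianPDFReal 0 1 x * q.eval x) := by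
    intro q
    have := integrable_poly_gaussian q
    rw [gaussianReal_of_var_ne_zero _ one_ne_zero, integrable_withDensity_iff_integrable_smul'] at this
    · simpa [toReal_gaussianPDF] using this
    · exact measurable_gaussianPDF 0 1
    · exact ae_of_all _ fun x => gaussianPDF_lt_top
  have hd : ∀ x, HasDerivAt (fun x => gaussianPDFReal 0 1 x * p.eval x)
      (gaussianPDFReal 0 1 x * (p.derivative - X * p).eval x) x := by
    intro x
    have h1 : HasDerivAt (fun x => gaussianPDFReal 0 1 x) (-x * gaussianPDFReal 0 1 x) x := by
      simp only [gaussianPDFReal]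
      have : HasDerivAt (fun x : ℝ => -(x - 0) ^ 2 / (2 * ((1 : NNReal) : ℝ))) (-x) x := by
        have := (((hasDerivAt_id x).sub_const 0).pow 2).neg.div_const (2 * ((1 : NNReal) : ℝ))
        refine this.congr_deriv ?_
        simp
        ring
      refine (this.exp.const_mul _).congr_deriv ?_
      ring
    refine (h1.mul (p.hasDerivAt x)).congr_deriv ?_
    rw [eval_sub, eval_mul, eval_X]
    ring
  have h0 := integral_eq_zero_of_hasDerivAt_of_integrable hd (hint _) (hint _)
  have h1 : ∫ x, (p.derivative - X * p).eval x ∂(gaussianReal 0 1) = 0 := by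
    rw [integral_gaussianReal_eq_integral_smul one_ne_zero]
    simpa using h0
  simp only [eval_sub] at h1
  rw [integral_sub (integrable_poly_gaussian _) (integrable_poly_gaussian _)] at h1
  linarith

open Polynomial in
/-- The `n`-th Hermite polynomial with real coefficients. -/
noncomputable def hermR (n : ℕ) : ℝ[X] := (hermite n).map (Int.castRingHom ℝ)

open Polynomial in
lemma HePoly_eq (n : ℕ) (x : ℝ) : HePoly n x = (hermR n).eval x := by
  rw [HePoly, hermR, eval_map, aeval_def]; rfl

open Polynomial in
/-- Testing against `He_n` differentiates `n` times. -/
lemma integral_hermR_mul (n : ℕ) (p : ℝ[X]) :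
    ∫ x, (hermR n * p).eval x ∂(gaussianReal 0 1)
      = ∫ x, (derivative^[n] p).eval x ∂(gaussianReal 0 1) := by
  induction n generalizing p with
  | zero => simp [hermR]
  | succ n ih =>
    have h1 : hermR (n + 1) * p = X * (hermR n * p) - (hermR n).derivative * p := by
      simp only [hermR, hermite_succ, Polynomial.map_sub, Polynomial.map_mul, map_X,
        derivative_map]
      ring
    rw [h1, Function.iterate_succ_apply, ← ih]
    simp only [eval_sub]
    rw [integral_sub (integrable_poly_gaussian _) (integrable_poly_gaussian _), stein_poly,
      ← integral_sub (integrable_poly_gaussian _) (integrable_poly_gaussian _)]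
    refine integral_congr_ae (ae_of_all _ fun x => ?_)
    simp [derivative_mul]

open Polynomial in
/-- Orthogonality of the Hermite polynomials, with their normalization. -/
lemma integral_hermR_hermR (j k : ℕ) :
    ∫ x, (hermR j * hermR k).eval x ∂(gaussianReal 0 1) = if j = k then (k.factorial : ℝ) else 0 := by
  have hdeg : ∀ n, (hermR n).natDegree ≤ n := fun n =>
    natDegree_map_le.trans natDegree_hermite.le
  have key : ∀ j k, k < j → ∫ x, (hermR j * hermR k).eval x ∂(gaussianReal 0 1) = 0 := by
    intro j k h
    rw [integral_hermR_mul, iterate_derivative_eq_zero ((hdeg k).trans_lt h)]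
    simp
  rcases lt_trichotomy j k with h | h | h
  · rw [if_neg h.ne, mul_comm]; exact key _ _ h
  · subst h
    rw [integral_hermR_mul, if_pos rfl]
    have hd : (hermR j).natDegree = j := by
      rw [hermR, (hermite_monic j).natDegree_map, natDegree_hermite]
    have h2 : (derivative^[j] (hermR j)) = C (j.factorial : ℝ) := by
      have hn : (derivative^[j] (hermR j)).natDegree ≤ 0 := by
        refine (natDegree_iterate_derivative _ _).trans ?_
        rw [hd]; simp
      rw [eq_C_of_natDegree_le_zero hn, coeff_iterate_derivative]
      simp [hermR, Nat.descFactorial_self]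
    rw [h2]; simp
  · rw [if_neg h.ne']; exact key _ _ h

/-! ### Orthogonality of the high-degree part to polynomials -/

lemma measurable_phiGt {σ : ℝ → ℝ} (hσ : Measurable σ) (ℓ : ℕ) : Measurable (phiGt σ ℓ) := by
  unfold phiGt
  simp only [HePoly_eq]
  fun_prop

/-- Subtracting a polynomial from `σ` preserves its growth bound. -/
lemma exists_phiGt_le {σ : ℝ → ℝ} {A b : ℝ} (hA : 0 ≤ A) (hb : 0 < b)
    (hσb : ∀ x, |σ x| ≤ A * Real.exp (b * x ^ 2)) (ℓ : ℕ) :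
    ∃ B : ℝ, 0 ≤ B ∧ ∀ x, |phiGt σ ℓ x| ≤ B * Real.exp (b * x ^ 2) := by
  obtain ⟨B, hB, h⟩ := exists_poly_le_exp_sq
    (∑ k ∈ Finset.range (ℓ + 1), Polynomial.C (hermiteCoeff σ k / (Nat.factorial k)) * hermR k) hb
  refine ⟨A + B, by positivity, fun x => ?_⟩
  have h2 := h x
  simp only [Polynomial.eval_finsetSum, Polynomial.eval_mul, Polynomial.eval_C,
    ← HePoly_eq] at h2
  rw [phiGt, add_mul]
  exact (abs_sub _ _).trans (add_le_add (hσb x) h2)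

open Polynomial in
/-- A function of subcritical Gaussian growth is integrable against every polynomial. -/
lemma integrable_mul_poly {f : ℝ → ℝ} (hf : Measurable f) {A b : ℝ} (hb : b < 1 / 2)
    (hfb : ∀ x, |f x| ≤ A * Real.exp (b * x ^ 2)) (p : ℝ[X]) :
    Integrable (fun x => f x * p.eval x) (gaussianReal 0 1) := by
  obtain ⟨B, hB, h⟩ := exists_poly_le_exp_sq p (b := (1 / 2 - b) / 2) (by linarith)
  refine integrable_of_le_exp_sq (A := A * B) (c := b + (1 / 2 - b) / 2) (by fun_prop)
    (by linarith) fun x => ?_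
  rw [abs_mul, add_mul, Real.exp_add]
  calc |f x| * |p.eval x| ≤ (A * Real.exp (b * x ^ 2)) * (B * Real.exp ((1 / 2 - b) / 2 * x ^ 2)) :=
        mul_le_mul (hfb x) (h x) (abs_nonneg _) ((abs_nonneg _).trans (hfb x))
    _ = _ := by ring

open Polynomial in
/-- `φ_{>ℓ}` is orthogonal to all polynomials of degree at most `ℓ`. -/
lemma integral_phiGt_mul_poly {σ : ℝ → ℝ} (hσ : Measurable σ) {A b : ℝ} (hA : 0 ≤ A) (hb : 0 < b)
    (hb' : b < 1 / 2) (hσb : ∀ x, |σ x| ≤ A * Real.exp (b * x ^ 2)) (ℓ : ℕ) (p : ℝ[X])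
    (hp : p.natDegree ≤ ℓ) :
    ∫ x, phiGt σ ℓ x * p.eval x ∂(gaussianReal 0 1) = 0 := by
  obtain ⟨B, hB, hφ⟩ := exists_phiGt_le hA hb hσb ℓ
  have hint := integrable_mul_poly (measurable_phiGt hσ ℓ) hb' hφ
  have hherm : ∀ n ≤ ℓ, ∫ x, phiGt σ ℓ x * (hermR n).eval x ∂(gaussianReal 0 1) = 0 := by
    intro n hn
    have h1 : ∀ x, phiGt σ ℓ x * (hermR n).eval x = σ x * (hermR n).eval x -
        ∑ k ∈ Finset.range (ℓ + 1),
          hermiteCoeff σ k / (Nat.factorial k) * (hermR k * hermR n).eval x := by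
      intro x
      simp only [phiGt, HePoly_eq, sub_mul, Finset.sum_mul, eval_mul, mul_assoc]
    simp only [h1]
    rw [integral_sub (integrable_mul_poly hσ hb' hσb _)
      (integrable_finsetSum _ fun k _ => (integrable_poly_gaussian _).const_mul _),
      integral_finsetSum _ fun k _ => (integrable_poly_gaussian _).const_mul _]
    simp only [integral_const_mul, integral_hermR_hermR]
    rw [Finset.sum_eq_single n]
    · have : (n.factorial : ℝ) ≠ 0 := by positivity
      rw [if_pos rfl, div_mul_cancel₀ _ this, sub_eq_zero]
      simp only [hermiteCoeff, HePoly_eq]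
    · intro k _ hk
      simp [hk]
    · intro h
      exact absurd (Finset.mem_range.2 (by omega)) h
  have key : ∀ n ≤ ℓ + 1, ∀ q : ℝ[X], q.degree < n →
      ∫ x, phiGt σ ℓ x * q.eval x ∂(gaussianReal 0 1) = 0 := by
    intro n
    induction n with
    | zero =>
      intro _ q hq
      have : q = 0 := by
        rw [← degree_eq_bot]; simpa using hq
      simp [this]
    | succ n ih =>
      intro hn q hq
      -- Subtracting the multiple of `He_n` with the same leading coefficient lowers the degree.
      have hq2 : (q - C (q.coeff n) * hermR n).degree < n := by
        rw [degree_lt_iff_coeff_zero] at hq ⊢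
        intro k hk
        rw [coeff_sub, coeff_C_mul]
        rcases hk.eq_or_lt with rfl | hk
        · simp [hermR, coeff_hermite_self]
        · rw [hq k hk]
          simp [hermR, coeff_hermite_of_lt hk]
      have h3 := ih (by omega) _ hq2
      simp only [eval_sub, eval_mul, eval_C, mul_sub] at h3
      rw [integral_sub (hint q) ?_] at h3
      · have h4 : ∀ x, phiGt σ ℓ x * (q.coeff n * (hermR n).eval x)
            = q.coeff n * (phiGt σ ℓ x * (hermR n).eval x) := fun x => by ring
        simp only [h4, integral_const_mul, hherm n (by omega)] at h3
        linarith
      · simpa using hint (C (q.coeff n) * hermR n)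
  refine key (ℓ + 1) le_rfl p ?_
  exact degree_le_natDegree.trans_lt (by exact_mod_cast Nat.lt_succ_of_le hp)

/-! ### Gaussian smoothing -/

/-- Change of variables `y = a + s ξ` in a Gaussian integral, with the ratio of the two Gaussian
densities written out. -/
lemma integral_gaussian_shift (φ : ℝ → ℝ) {a s : ℝ} (hs : 0 < s) :
    ∫ ξ, φ (a + s * ξ) ∂(gaussianReal 0 1) = s⁻¹ * Real.exp (-(a ^ 2 / (2 * s ^ 2))) *
      ∫ y, φ y * Real.exp (-((1 - s ^ 2) / (2 * s ^ 2)) * y ^ 2 + a / s ^ 2 * y)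
        ∂(gaussianReal 0 1) := by
  rw [integral_gaussianReal_eq_integral_smul one_ne_zero,
    integral_gaussianReal_eq_integral_smul one_ne_zero]
  let g : ℝ → ℝ := fun y => gaussianPDFReal 0 1 ((y - a) / s) * φ y
  have h1 : ∀ ξ, gaussianPDFReal 0 1 ξ • φ (a + s * ξ) = g (a + s * ξ) := by
    intro ξ
    simp only [g, smul_eq_mul]
    congr 2
    field_simp
    ring
  simp only [h1]
  rw [Measure.integral_comp_mul_left (fun y => g (a + y)) s,
    integral_add_left_eq_self (μ := (volume : Measure ℝ)) g a,
    abs_of_pos (inv_pos.2 hs), smul_eq_mul, mul_assoc]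
  congr 1
  rw [← integral_const_mul]
  refine integral_congr_ae (ae_of_all _ fun y => ?_)
  simp only [g, gaussianPDFReal, smul_eq_mul]
  have : Real.exp (-((y - a) / s - 0) ^ 2 / (2 * ((1 : NNReal) : ℝ))) =
      Real.exp (-(a ^ 2 / (2 * s ^ 2))) * (Real.exp (-(y - 0) ^ 2 / (2 * ((1 : NNReal) : ℝ))) *
        Real.exp (-((1 - s ^ 2) / (2 * s ^ 2)) * y ^ 2 + a / s ^ 2 * y)) := by
    rw [← Real.exp_add, ← Real.exp_add]
    congr 1
    simp only [NNReal.coe_one]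
    field_simp
    ring
  rw [this]
  ring

lemma abs_exp_sub_sum_le (t : ℝ) (n : ℕ) :
    |Real.exp t - ∑ k ∈ Finset.range n, t ^ k / k.factorial| ≤ |t| ^ n * Real.exp |t| := by
  have := Complex.norm_exp_sub_sum_le_norm_mul_exp (t : ℂ) n
  have h : Complex.exp (t : ℂ) - ∑ k ∈ Finset.range n, (t : ℂ) ^ k / (k.factorial : ℂ)
      = ((Real.exp t - ∑ k ∈ Finset.range n, t ^ k / k.factorial : ℝ) : ℂ) := by
    push_cast; rfl
  rwa [h, Complex.norm_real, Complex.norm_real, Real.norm_eq_abs, Real.norm_eq_abs] at this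

open Polynomial in
/-- Gaussian smoothing of a function orthogonal to all polynomials of degree `≤ 2N` is of size
`r ^ N`, where `r` is the correlation: the density ratio is `exp T` with `T` a polynomial of degree
two in the integration variable and of size `O(r)`, and the first `N` Taylor terms of `exp T`
integrate to zero. -/
lemma smoothing_bound {φ : ℝ → ℝ} (hφ : Measurable φ) {B b : ℝ} (hB : 0 ≤ B) (hb' : b ≤ 1 / 8)
    (hφb : ∀ x, |φ x| ≤ B * Real.exp (b * x ^ 2)) (N : ℕ)
    (horth : ∀ p : ℝ[X], p.natDegree ≤ 2 * N →
      ∫ x, φ x * p.eval x ∂(gaussianReal 0 1) = 0) :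
    ∃ C : ℝ, 0 ≤ C ∧ ∀ r s x : ℝ, 0 ≤ r → r ≤ 1 / 32 → 0 ≤ s → s ^ 2 = 1 - r ^ 2 →
      |∫ ξ, φ (r * x + s * ξ) ∂(gaussianReal 0 1)| ≤ C * r ^ N * Real.exp (x ^ 2 / 16) := by
  set I : ℝ := ∫ y, Real.exp ((b + 1 / 16) * y ^ 2) ∂(gaussianReal 0 1) with hI
  have hI0 : 0 ≤ I := integral_nonneg fun y => (Real.exp_pos _).le
  refine ⟨2 * (32 ^ N * N.factorial * B * I), by positivity, ?_⟩
  intro r s x hr hr' hs0 hs2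
  have hs34 : 3 / 4 ≤ s ^ 2 := by rw [hs2]; nlinarith
  have hs : 1 / 2 ≤ s := by nlinarith
  have hspos : 0 < s := by linarith
  rw [integral_gaussian_shift φ hspos]
  set κ : ℝ := (1 - s ^ 2) / (2 * s ^ 2) with hκ
  set β : ℝ := r * x / s ^ 2 with hβ
  set T : ℝ → ℝ := fun y => -κ * y ^ 2 + β * y with hT
  have hκ0 : 0 ≤ κ := by
    rw [hκ, hs2]; apply div_nonneg <;> nlinarith
  have hκr : κ ≤ r / 3 := by
    rw [hκ, div_le_iff₀ (by positivity), hs2]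
    nlinarith
  have hβr : |β| ≤ 4 / 3 * (r * |x|) := by
    rw [hβ, abs_div, abs_mul, abs_of_nonneg hr, abs_of_nonneg (sq_nonneg s),
      div_le_iff₀ (by positivity)]
    nlinarith [mul_nonneg hr (abs_nonneg x)]
  have hTb : ∀ y, |T y| ≤ r * (x ^ 2 + y ^ 2) := by
    intro y
    have h1 : |T y| ≤ κ * y ^ 2 + |β| * |y| := by
      refine (abs_add_le _ _).trans (le_of_eq ?_)
      rw [abs_mul, abs_mul, abs_neg, abs_of_nonneg hκ0, abs_of_nonneg (sq_nonneg y)]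
    have h2 : κ * y ^ 2 ≤ r / 3 * y ^ 2 := by gcongr
    have h3 : |β| * |y| ≤ 4 / 3 * (r * |x|) * |y| := by gcongr
    have h4 : |x| * |y| ≤ (x ^ 2 + y ^ 2) / 2 := by
      nlinarith [sq_nonneg (|x| - |y|), sq_abs x, sq_abs y]
    have h5 := mul_le_mul_of_nonneg_left h4 hr
    nlinarith [mul_nonneg hr (sq_nonneg x)]
  have hTb' : ∀ y, |T y| ≤ (x ^ 2 + y ^ 2) / 32 := fun y => (hTb y).trans (by
    nlinarith [sq_nonneg x, sq_nonneg y])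
  have hTm : Measurable T := by fun_prop
  -- The Taylor polynomial of `exp T`, as a polynomial in the integration variable.
  set P : ℝ[X] := ∑ k ∈ Finset.range N, C ((k.factorial : ℝ)⁻¹) * (C (-κ) * X ^ 2 + C β * X) ^ k
    with hP
  have hPeval : ∀ y, P.eval y = ∑ k ∈ Finset.range N, T y ^ k / k.factorial := by
    intro y
    simp only [hP, eval_finsetSum, eval_mul, eval_C, eval_pow, eval_add, eval_X, hT]
    exact Finset.sum_congr rfl fun k _ => by rw [div_eq_inv_mul]
  have hPdeg : P.natDegree ≤ 2 * N := by
    refine natDegree_sum_le_of_forall_le _ _ fun k hk => ?_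
    refine (natDegree_C_mul_le _ _).trans (natDegree_pow_le.trans ?_)
    have h2 : (C (-κ) * X ^ 2 + C β * X : ℝ[X]).natDegree ≤ 2 := by compute_degree
    have := Finset.mem_range.1 hk
    nlinarith
  have hint1 : Integrable (fun y => φ y * Real.exp (T y)) (gaussianReal 0 1) := by
    refine integrable_of_le_exp_sq (A := B * Real.exp (x ^ 2 / 32)) (c := b + 1 / 32)
      (by fun_prop) (by linarith) fun y => ?_
    rw [abs_mul, Real.abs_exp]
    calc |φ y| * Real.exp (T y)
        ≤ (B * Real.exp (b * y ^ 2)) * Real.exp ((x ^ 2 + y ^ 2) / 32) := by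
          gcongr
          · exact hφb y
          · exact (le_abs_self _).trans (hTb' y)
      _ = _ := by
          rw [mul_assoc, mul_assoc, ← Real.exp_add, ← Real.exp_add]
          congr 2; ring
  have hint2 : Integrable (fun y => φ y * P.eval y) (gaussianReal 0 1) :=
    integrable_mul_poly hφ (by linarith) hφb P
  have hmain : |∫ y, φ y * Real.exp (T y) ∂(gaussianReal 0 1)|
      ≤ (32 * r) ^ N * N.factorial * B * Real.exp (x ^ 2 / 16) * I := by
    have h0 : ∫ y, φ y * Real.exp (T y) ∂(gaussianReal 0 1)
        = ∫ y, φ y * (Real.exp (T y) - P.eval y) ∂(gaussianReal 0 1) := by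
      simp only [mul_sub]
      rw [integral_sub hint1 hint2, horth P hPdeg, sub_zero]
    rw [h0, hI, ← integral_const_mul, ← Real.norm_eq_abs]
    refine norm_integral_le_of_norm_le ((integrable_exp_sq_gaussian (by linarith)).const_mul _)
      (ae_of_all _ fun y => ?_)
    rw [Real.norm_eq_abs, abs_mul, hPeval]
    have h1 := abs_exp_sub_sum_le (T y) N
    set S := x ^ 2 + y ^ 2 with hS
    have hS0 : 0 ≤ S := by positivity
    have h2 : |T y| ^ N * Real.exp |T y|
        ≤ (32 * r) ^ N * N.factorial * Real.exp (S / 16) := by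
      calc |T y| ^ N * Real.exp |T y| ≤ (r * S) ^ N * Real.exp (S / 32) := by
            gcongr
            · exact hTb y
            · exact hTb' y
        _ = (32 * r) ^ N * (S / 32) ^ N * Real.exp (S / 32) := by
            rw [← mul_pow]; congr 2; ring
        _ ≤ (32 * r) ^ N * (N.factorial * Real.exp (S / 32)) * Real.exp (S / 32) := by
            gcongr
            exact pow_le_factorial_mul_exp (by positivity) N
        _ = (32 * r) ^ N * N.factorial * (Real.exp (S / 32) * Real.exp (S / 32)) := by ring
        _ = _ := by rw [← Real.exp_add]; congr 2; ring
    calc |φ y| * |Real.exp (T y) - ∑ k ∈ Finset.range N, T y ^ k / k.factorial|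
        ≤ (B * Real.exp (b * y ^ 2)) * ((32 * r) ^ N * N.factorial * Real.exp (S / 16)) := by
          gcongr
          · exact hφb y
          · exact h1.trans h2
      _ = (32 * r) ^ N * N.factorial * B * (Real.exp (b * y ^ 2) * Real.exp (S / 16)) := by ring
      _ = (32 * r) ^ N * N.factorial * B *
            (Real.exp (x ^ 2 / 16) * Real.exp ((b + 1 / 16) * y ^ 2)) := by
          rw [← Real.exp_add, ← Real.exp_add]
          congr 2
          rw [hS]; ring
      _ = _ := by ring
  have h3 : s⁻¹ ≤ 2 := by
    rw [inv_le_comm₀ hspos (by norm_num)]; linarith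
  have h4 : Real.exp (-((r * x) ^ 2 / (2 * s ^ 2))) ≤ 1 :=
    Real.exp_le_one_iff.2 (by rw [neg_nonpos]; positivity)
  rw [abs_mul, abs_of_nonneg (by positivity : 0 ≤ s⁻¹ * Real.exp (-((r * x) ^ 2 / (2 * s ^ 2))))]
  calc _ ≤ (2 * 1) * ((32 * r) ^ N * N.factorial * B * Real.exp (x ^ 2 / 16) * I) := by
        gcongr
    _ = _ := by rw [mul_pow]; ring

/-! ### Gaussian vectors and almost orthogonal families -/

section GaussianSpace
variable {E : Type*} [NormedAddCommGroup E] [InnerProductSpace ℝ E] [FiniteDimensional ℝ E]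
  [MeasurableSpace E] [BorelSpace E]

lemma map_inner_stdGaussian {u : E} (hu : ‖u‖ = 1) :
    (ProbabilityTheory.stdGaussian E).map (fun g => ⟪u, g⟫) = gaussianReal 0 1 := by
  have h := IsGaussian.map_eq_gaussianReal (μ := ProbabilityTheory.stdGaussian E) (innerSL ℝ u)
  rw [integral_strongDual_stdGaussian, variance_dual_stdGaussian, innerSL_apply_norm, hu] at h
  simpa using h

lemma integral_inner_stdGaussian {u : E} (hu : ‖u‖ = 1) {f : ℝ → ℝ} (hf : Measurable f) :
    ∫ g, f ⟪u, g⟫ ∂(ProbabilityTheory.stdGaussian E) = ∫ x, f x ∂(gaussianReal 0 1) := by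
  rw [← map_inner_stdGaussian hu, integral_map (by fun_prop) hf.aestronglyMeasurable]

lemma integrable_inner_stdGaussian {u : E} (hu : ‖u‖ = 1) {f : ℝ → ℝ} (hf : Measurable f)
    (h : Integrable f (gaussianReal 0 1)) :
    Integrable (fun g => f ⟪u, g⟫) (ProbabilityTheory.stdGaussian E) := by
  rw [← map_inner_stdGaussian hu] at h
  exact (integrable_map_measure hf.aestronglyMeasurable (by fun_prop)).1 h

/-- Replacing the component of a standard Gaussian vector along a unit vector `e` by an
independent standard normal does not change the law. -/
lemma map_resample_stdGaussian {e : E} (he : ‖e‖ = 1) :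
    ((ProbabilityTheory.stdGaussian E).prod (gaussianReal 0 1)).map
      (fun p : E × ℝ => p.1 - ⟪e, p.1⟫ • e + p.2 • e) = ProbabilityTheory.stdGaussian E := by
  have hm : Measurable (fun p : E × ℝ => p.1 - ⟪e, p.1⟫ • e + p.2 • e) := by fun_prop
  have : IsProbabilityMeasure (((ProbabilityTheory.stdGaussian E).prod (gaussianReal 0 1)).map
      (fun p : E × ℝ => p.1 - ⟪e, p.1⟫ • e + p.2 • e)) :=
    Measure.isProbabilityMeasure_map hm.aemeasurable
  apply Measure.ext_of_charFun
  ext t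
  rw [charFun_stdGaussian, charFun_apply, integral_map hm.aemeasurable (by fun_prop)]
  have h1 : ∀ p : E × ℝ, Complex.exp ((⟪p.1 - ⟪e, p.1⟫ • e + p.2 • e, t⟫ : ℝ) * Complex.I)
      = Complex.exp ((⟪p.1, t - ⟪e, t⟫ • e⟫ : ℝ) * Complex.I)
        * Complex.exp ((⟪e, t⟫ : ℝ) * (p.2 : ℝ) * Complex.I) := by
    intro p
    rw [← Complex.exp_add]
    congr 1
    rw [inner_add_left, inner_sub_left, inner_sub_right, inner_smul_left, inner_smul_left,
      inner_smul_right, real_inner_comm p.1 e]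
    push_cast
    simp
    ring
  simp only [h1]
  rw [integral_prod_mul (fun g : E => Complex.exp ((⟪g, t - ⟪e, t⟫ • e⟫ : ℝ) * Complex.I))
    (fun x : ℝ => Complex.exp ((⟪e, t⟫ : ℝ) * (x : ℝ) * Complex.I)), ← charFun_apply,
    ← charFun_apply_real, charFun_stdGaussian, charFun_gaussianReal, ← Complex.exp_add]
  congr 1
  have h2 : ‖t - ⟪e, t⟫ • e‖ ^ 2 = ‖t‖ ^ 2 - ⟪e, t⟫ ^ 2 := by
    rw [norm_sub_sq_real, inner_smul_right, real_inner_comm, norm_smul, he, Real.norm_eq_abs,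
      mul_one, sq_abs]
    ring
  have h3 : ((‖t - ⟪e, t⟫ • e‖ : ℝ) : ℂ) ^ 2 = ((‖t‖ : ℝ) : ℂ) ^ 2 - ((⟪e, t⟫ : ℝ) : ℂ) ^ 2 := by
    exact_mod_cast h2
  rw [h3]
  simp
  ring

/-- If `F (g) = φ ⟪u, g⟫ H (g)`, where `H` does not see the direction `e` and `u` has
component `s` along `e`, then the Gaussian mean of `F` is controlled by the size of the
smoothing of `φ` at correlation `r`. -/
lemma abs_integral_le_of_smoothing {φ : ℝ → ℝ} (hφ : Measurable φ) {K r s : ℝ}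
    (hK : ∀ x : ℝ, |∫ ξ, φ (r * x + s * ξ) ∂(gaussianReal 0 1)| ≤ K * Real.exp (x ^ 2 / 16))
    {u z e : E} (hu : u = r • z + s • e) (he : ‖e‖ = 1) (hez : ⟪e, z⟫ = 0)
    (hz : z = 0 ∨ ‖z‖ = 1) {H : E → ℝ} (hH : ∀ (g : E) (c : ℝ), H (g + c • e) = H g)
    (hHm : Measurable H)
    (hF : Integrable (fun g => φ ⟪u, g⟫ * H g) (ProbabilityTheory.stdGaussian E))
    (hH2 : Integrable (fun g => H g ^ 2) (ProbabilityTheory.stdGaussian E)) :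
    |∫ g, φ ⟪u, g⟫ * H g ∂(ProbabilityTheory.stdGaussian E)| ≤
      K * ((1 + ∫ x, Real.exp (1 / 8 * x ^ 2) ∂(gaussianReal 0 1))
        + ∫ g, H g ^ 2 ∂(ProbabilityTheory.stdGaussian E)) := by
  have hres := map_resample_stdGaussian he
  set γ := ProbabilityTheory.stdGaussian E
  have hm : Measurable (fun p : E × ℝ => p.1 - ⟪e, p.1⟫ • e + p.2 • e) := by fun_prop
  have hFm : Measurable (fun g => φ ⟪u, g⟫ * H g) := by fun_prop
  have hK0 : 0 ≤ K := by
    have := (abs_nonneg _).trans (hK 0)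
    simpa using this
  have hval : ∀ p : E × ℝ, φ ⟪u, p.1 - ⟪e, p.1⟫ • e + p.2 • e⟫ * H (p.1 - ⟪e, p.1⟫ • e + p.2 • e)
      = H p.1 * φ (r * ⟪z, p.1⟫ + s * p.2) := by
    intro p
    have h1 : p.1 - ⟪e, p.1⟫ • e + p.2 • e = p.1 + (p.2 - ⟪e, p.1⟫) • e := by
      rw [sub_smul]; abel
    rw [h1, hH, mul_comm]
    congr 2
    rw [hu]
    simp only [inner_add_right, inner_add_left, inner_smul_left, inner_smul_right]
    rw [real_inner_comm e z, real_inner_self_eq_norm_sq, hez, he]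
    simp
    ring
  have hint : Integrable (fun p : E × ℝ => H p.1 * φ (r * ⟪z, p.1⟫ + s * p.2))
      (γ.prod (gaussianReal 0 1)) := by
    have h2 := hF
    rw [← hres] at h2
    have h3 := (integrable_map_measure hFm.aestronglyMeasurable hm.aemeasurable).1 h2
    exact h3.congr (ae_of_all _ fun p => hval p)
  have heq : ∫ g, φ ⟪u, g⟫ * H g ∂γ
      = ∫ g, H g * ∫ ξ, φ (r * ⟪z, g⟫ + s * ξ) ∂(gaussianReal 0 1) ∂γ := by
    conv_lhs => rw [← hres]
    rw [integral_map hm.aemeasurable hFm.aestronglyMeasurable]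
    simp only [hval]
    rw [integral_prod _ hint]
    simp only [integral_const_mul]
  have hem : Measurable (fun x : ℝ => Real.exp (1 / 8 * x ^ 2)) := by fun_prop
  have he1 : Integrable (fun x : ℝ => Real.exp (1 / 8 * x ^ 2)) (gaussianReal 0 1) :=
    integrable_exp_sq_gaussian (by norm_num)
  have hpos : 0 ≤ ∫ x, Real.exp (1 / 8 * x ^ 2) ∂(gaussianReal 0 1) :=
    integral_nonneg fun x => (Real.exp_pos _).le
  have hexp : Integrable (fun g => Real.exp (1 / 8 * ⟪z, g⟫ ^ 2)) γ ∧
      ∫ g, Real.exp (1 / 8 * ⟪z, g⟫ ^ 2) ∂γ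
        ≤ 1 + ∫ x, Real.exp (1 / 8 * x ^ 2) ∂(gaussianReal 0 1) := by
    rcases hz with rfl | hz
    · simpa [γ] using hpos
    · refine ⟨integrable_inner_stdGaussian hz hem he1, ?_⟩
      rw [integral_inner_stdGaussian hz hem]
      linarith
  rw [heq, ← Real.norm_eq_abs]
  calc ‖∫ g, H g * ∫ ξ, φ (r * ⟪z, g⟫ + s * ξ) ∂(gaussianReal 0 1) ∂γ‖
      ≤ ∫ g, K * (Real.exp (1 / 8 * ⟪z, g⟫ ^ 2) + H g ^ 2) ∂γ := by
        refine norm_integral_le_of_norm_le ((hexp.1.add hH2).const_mul K) (ae_of_all _ fun g => ?_)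
        rw [norm_mul, Real.norm_eq_abs, Real.norm_eq_abs]
        set x := ⟪z, g⟫
        have h5 : Real.exp (1 / 8 * x ^ 2) = Real.exp (x ^ 2 / 16) ^ 2 := by
          rw [← Real.exp_nat_mul]; congr 1; push_cast; ring
        have h6 : |H g| * Real.exp (x ^ 2 / 16) ≤ Real.exp (1 / 8 * x ^ 2) + H g ^ 2 := by
          rw [h5, ← sq_abs (H g)]
          nlinarith [sq_nonneg (|H g| - Real.exp (x ^ 2 / 16)), sq_nonneg (|H g|),
            sq_nonneg (Real.exp (x ^ 2 / 16))]
        calc |H g| * |∫ ξ, φ (r * x + s * ξ) ∂(gaussianReal 0 1)|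
            ≤ |H g| * (K * Real.exp (x ^ 2 / 16)) := by gcongr; exact hK x
          _ = K * (|H g| * Real.exp (x ^ 2 / 16)) := by ring
          _ ≤ _ := by gcongr
    _ = K * (∫ g, Real.exp (1 / 8 * ⟪z, g⟫ ^ 2) ∂γ + ∫ g, H g ^ 2 ∂γ) := by
        rw [integral_const_mul, integral_add hexp.1 hH2]
    _ ≤ _ := by gcongr; exact hexp.2

end GaussianSpace

section LinearAlgebra
variable {E : Type*} [NormedAddCommGroup E] [InnerProductSpace ℝ E]

/-- Almost orthogonal unit vectors are well conditioned. -/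
lemma half_sum_sq_le_norm_sq {G : Type*} (T : Finset G) (V : G → E) {ε : ℝ}
    (hε0 : 0 ≤ ε) (hε : ε * T.card ≤ 1 / 2) (hV : ∀ t ∈ T, ‖V t‖ = 1)
    (hG : ∀ s ∈ T, ∀ t ∈ T, s ≠ t → |⟪V s, V t⟫| ≤ ε) (c : G → ℝ) :
    1 / 2 * ∑ t ∈ T, c t ^ 2 ≤ ‖∑ t ∈ T, c t • V t‖ ^ 2 := by
  classical
  have h1 : ∑ s ∈ T, ∑ t ∈ T, ((if s = t then c s ^ 2 else 0) - ε * (|c s| * |c t|))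
      ≤ ‖∑ t ∈ T, c t • V t‖ ^ 2 := by
    rw [← real_inner_self_eq_norm_sq, sum_inner]
    refine Finset.sum_le_sum fun s hs => ?_
    rw [inner_sum]
    refine Finset.sum_le_sum fun t ht => ?_
    rw [inner_smul_left, inner_smul_right]
    simp only [conj_trivial]
    split_ifs with h
    · subst h
      rw [real_inner_self_eq_norm_sq, hV s hs]
      nlinarith [mul_nonneg hε0 (mul_nonneg (abs_nonneg (c s)) (abs_nonneg (c s)))]
    · have h2 := hG s hs t ht h
      have h3 : |c s * (c t * ⟪V s, V t⟫)| ≤ ε * (|c s| * |c t|) := by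
        rw [abs_mul, abs_mul, ← mul_assoc, mul_comm]
        gcongr
      linarith [(abs_le.1 h3).1]
  have h2 : ∑ s ∈ T, ∑ t ∈ T, ((if s = t then c s ^ 2 else 0) - ε * (|c s| * |c t|))
      = ∑ s ∈ T, c s ^ 2 - ε * (∑ s ∈ T, |c s|) ^ 2 := by
    simp only [Finset.sum_sub_distrib]
    congr 1
    · refine Finset.sum_congr rfl fun s hs => ?_
      simp [hs]
    · rw [sq, Finset.sum_mul_sum, Finset.mul_sum]
      refine Finset.sum_congr rfl fun s _ => ?_
      rw [Finset.mul_sum]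
  have h3 : (∑ s ∈ T, |c s|) ^ 2 ≤ T.card * ∑ s ∈ T, c s ^ 2 := by
    have := sq_sum_le_card_mul_sum_sq (s := T) (f := fun t => |c t|)
    simpa using this
  have h4 : 0 ≤ ∑ s ∈ T, c s ^ 2 := Finset.sum_nonneg fun _ _ => sq_nonneg _
  nlinarith [mul_le_mul_of_nonneg_left h3 hε0, mul_le_mul_of_nonneg_right hε h4]

/-- A unit vector nearly orthogonal to each member of an almost orthogonal family of unit
vectors has a small component in their span. -/
lemma exists_orthogonal_decomposition [FiniteDimensional ℝ E] {G : Type*} (T : Finset G) (V : G → E) {ε : ℝ}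
    (hε0 : 0 ≤ ε) (hε : ε * T.card ≤ 1 / 2) (hV : ∀ t ∈ T, ‖V t‖ = 1)
    (hG : ∀ s ∈ T, ∀ t ∈ T, s ≠ t → |⟪V s, V t⟫| ≤ ε) {u : E} (hu : ‖u‖ = 1)
    (hR : 2 * ∑ t ∈ T, ⟪u, V t⟫ ^ 2 < 1) :
    ∃ (r s : ℝ) (z e : E), u = r • z + s • e ∧ ‖e‖ = 1 ∧ (z = 0 ∨ ‖z‖ = 1) ∧ ⟪e, z⟫ = 0 ∧
      0 ≤ r ∧ 0 ≤ s ∧ s ^ 2 = 1 - r ^ 2 ∧ (∀ t ∈ T, ⟪V t, e⟫ = 0) ∧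
      r ^ 2 ≤ 2 * ∑ t ∈ T, ⟪u, V t⟫ ^ 2 := by
  classical
  set K : Submodule ℝ E := Submodule.span ℝ (V '' (T : Set G)) with hK
  set p : E := K.starProjection u with hp
  set q : E := u - p with hq
  have hpK : p ∈ K := K.starProjection_apply_mem u
  have hqK : ∀ x ∈ K, ⟪x, q⟫ = 0 := by
    intro x hx
    exact (Submodule.mem_orthogonal _ _).1 (K.sub_starProjection_mem_orthogonal u) x hx
  have hpq : ⟪p, q⟫ = 0 := hqK p hpK
  have hsum : ‖q‖ ^ 2 = 1 - ‖p‖ ^ 2 := by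
    have h1 : u = p + q := by rw [hq]; abel
    have h2 := norm_add_sq_real p q
    rw [← h1, hu, hpq] at h2
    linarith
  have hpu : ‖p‖ ^ 2 = ⟪p, u⟫ := by
    have h1 : u = p + q := by rw [hq]; abel
    conv_rhs => rw [h1, inner_add_right, hpq, real_inner_self_eq_norm_sq, add_zero]
  obtain ⟨c, hc⟩ : ∃ c : G → ℝ, ∑ t ∈ T, c t • V t = p := by
    have := hpK
    rw [hK] at this
    obtain ⟨c, hc⟩ := (Submodule.mem_span_image_finset_iff_exists_fun ℝ).1 this
    refine ⟨fun t => if h : t ∈ T then c ⟨t, h⟩ else 0, ?_⟩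
    rw [← hc, ← Finset.sum_coe_sort T]
    exact Finset.sum_congr rfl fun t _ => by simp
  have h1 := half_sum_sq_le_norm_sq T V hε0 hε hV hG c
  rw [hc] at h1
  set R := ∑ t ∈ T, ⟪u, V t⟫ ^ 2 with hRdef
  have hR0 : 0 ≤ R := Finset.sum_nonneg fun _ _ => sq_nonneg _
  have h2 : ‖p‖ ^ 2 = ∑ t ∈ T, c t * ⟪u, V t⟫ := by
    rw [hpu, ← hc, sum_inner]
    refine Finset.sum_congr rfl fun t _ => ?_
    rw [inner_smul_left, real_inner_comm]; simp
  have h3 : (‖p‖ ^ 2) ^ 2 ≤ (∑ t ∈ T, c t ^ 2) * R := by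
    rw [h2]; exact Finset.sum_mul_sq_le_sq_mul_sq _ _ _
  have h4 : ‖p‖ ^ 2 ≤ 2 * R := by
    by_contra hcon
    push Not at hcon
    have h5 : (∑ t ∈ T, c t ^ 2) * R ≤ (2 * ‖p‖ ^ 2) * R := by gcongr; linarith
    nlinarith [sq_nonneg ‖p‖]
  have hqpos : 0 < ‖q‖ := by
    have : 0 < ‖q‖ ^ 2 := by rw [hsum]; linarith
    exact (norm_nonneg q).lt_of_ne fun h => by simp [← h] at this
  refine ⟨‖p‖, ‖q‖, ‖p‖⁻¹ • p, ‖q‖⁻¹ • q, ?_, ?_, ?_, ?_, norm_nonneg _, norm_nonneg _, hsum, ?_, h4⟩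
  · rw [smul_smul, smul_smul, mul_inv_cancel₀ hqpos.ne', one_smul]
    rcases eq_or_ne p 0 with h | h
    · rw [h]; simp [hq, h]
    · rw [mul_inv_cancel₀ (norm_ne_zero_iff.2 h), one_smul, hq]; abel
  · rw [norm_smul, norm_inv, norm_norm, inv_mul_cancel₀ hqpos.ne']
  · rcases eq_or_ne p 0 with h | h
    · left; simp [h]
    · right; rw [norm_smul, norm_inv, norm_norm, inv_mul_cancel₀ (norm_ne_zero_iff.2 h)]
  · rw [inner_smul_left, inner_smul_right, real_inner_comm, hpq]; simp
  · intro t ht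
    rw [inner_smul_right, hqK _ (Submodule.subset_span ⟨t, ht, rfl⟩), mul_zero]

end LinearAlgebra

/-! ### Gaussian means of products -/

/-- A product of `n` nonnegative numbers is at most the `n`-th power of the largest one. -/
lemma prod_le_sum_pow_card {ι : Type*} (S : Finset ι) (hS : S.Nonempty) (a : ι → ℝ)
    (ha : ∀ i, 0 ≤ a i) : ∏ i ∈ S, a i ≤ ∑ i ∈ S, a i ^ S.card := by
  obtain ⟨j, hj, hmax⟩ := S.exists_max_image a hS
  calc ∏ i ∈ S, a i ≤ ∏ _i ∈ S, a j := Finset.prod_le_prod (fun i _ => ha i) hmax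
    _ = a j ^ S.card := by rw [Finset.prod_const]
    _ ≤ _ := Finset.single_le_sum (f := fun i => a i ^ S.card)
      (fun i _ => pow_nonneg (ha i) _) hj

lemma integrable_abs_pow {φ : ℝ → ℝ} (hφ : Measurable φ) {m : ℕ} {B : ℝ}
    (hφb : ∀ x, |φ x| ≤ B * Real.exp (1 / (8 * m) * x ^ 2)) {k : ℕ} (hk : k < 4 * m) :
    Integrable (fun x => |φ x| ^ k) (gaussianReal 0 1) := by
  have hm : (0 : ℝ) < m := by
    have : 0 < m := by omega
    exact_mod_cast this
  refine integrable_of_le_exp_sq (A := B ^ k) (c := k * (1 / (8 * m))) (by fun_prop) ?_ fun x => ?_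
  · have : (k : ℝ) < 4 * m := by exact_mod_cast hk
    rw [mul_one_div, div_lt_iff₀ (by positivity)]
    linarith
  · rw [abs_pow, abs_abs]
    calc |φ x| ^ k ≤ (B * Real.exp (1 / (8 * m) * x ^ 2)) ^ k :=
          pow_le_pow_left₀ (abs_nonneg _) (hφb x) k
      _ = _ := by rw [mul_pow, ← Real.exp_nat_mul, mul_assoc]

section Products
variable {E : Type*} [NormedAddCommGroup E] [InnerProductSpace ℝ E] [FiniteDimensional ℝ E]
  [MeasurableSpace E] [BorelSpace E]

/-- A product of factors `|φ ⟪v i, g⟫| ^ q` is dominated by the sum of the powers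
`|φ ⟪v i, g⟫| ^ (q * S.card)`, each of which has a mean independent of the unit vector `v i`. -/
lemma integrable_prod_inner {φ : ℝ → ℝ} (hφ : Measurable φ) {ι : Type*} (S : Finset ι)
    (hS : S.Nonempty) (q : ℕ)
    (hint : Integrable (fun x => |φ x| ^ (q * S.card)) (gaussianReal 0 1))
    (v : ι → E) (hv : ∀ i, ‖v i‖ = 1) :
    Integrable (fun g => ∏ i ∈ S, |φ ⟪v i, g⟫| ^ q) (ProbabilityTheory.stdGaussian E) ∧
    ∫ g, ∏ i ∈ S, |φ ⟪v i, g⟫| ^ q ∂(ProbabilityTheory.stdGaussian E)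
      ≤ S.card * ∫ x, |φ x| ^ (q * S.card) ∂(gaussianReal 0 1) := by
  have hm : Measurable (fun x => |φ x| ^ (q * S.card)) := by fun_prop
  have h1 : ∀ i ∈ S, Integrable (fun g => |φ ⟪v i, g⟫| ^ (q * S.card))
      (ProbabilityTheory.stdGaussian E) := fun i _ => integrable_inner_stdGaussian (hv i) hm hint
  have h2 : ∀ g, ∏ i ∈ S, |φ ⟪v i, g⟫| ^ q ≤ ∑ i ∈ S, |φ ⟪v i, g⟫| ^ (q * S.card) := by
    intro g
    simpa only [pow_mul] using prod_le_sum_pow_card S hS (fun i => |φ ⟪v i, g⟫| ^ q)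
      (fun i => by positivity)
  have h3 : Integrable (fun g => ∏ i ∈ S, |φ ⟪v i, g⟫| ^ q)
      (ProbabilityTheory.stdGaussian E) := by
    refine (integrable_finsetSum S h1).mono' (Measurable.aestronglyMeasurable (by fun_prop)) (ae_of_all _ fun g => ?_)
    rw [Real.norm_eq_abs, abs_of_nonneg (Finset.prod_nonneg fun i _ => by positivity)]
    exact h2 g
  refine ⟨h3, (integral_mono h3 (integrable_finsetSum S h1) h2).trans (le_of_eq ?_)⟩
  rw [integral_finsetSum S h1]
  simp only [fun i => integral_inner_stdGaussian (hv i) hm, Finset.sum_const, nsmul_eq_mul]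

/-- The trivial bound on the Gaussian mean of a product of `2m` factors, uniform in the vectors. -/
lemma integrable_prod_and_abs_integral_le {φ : ℝ → ℝ} (hφ : Measurable φ) {m : ℕ} (hm : 1 ≤ m)
    {B : ℝ} (hφb : ∀ x, |φ x| ≤ B * Real.exp (1 / (8 * m) * x ^ 2))
    (v : Fin (2 * m) → E) (hv : ∀ i, ‖v i‖ = 1) :
    Integrable (fun g => ∏ i, φ ⟪v i, g⟫) (ProbabilityTheory.stdGaussian E) ∧
    |∫ g, ∏ i, φ ⟪v i, g⟫ ∂(ProbabilityTheory.stdGaussian E)|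
      ≤ 2 * m * ∫ x, |φ x| ^ (2 * m) ∂(gaussianReal 0 1) := by
  have hne : (Finset.univ : Finset (Fin (2 * m))).Nonempty := ⟨⟨0, by omega⟩, Finset.mem_univ _⟩
  obtain ⟨h1, h2⟩ := integrable_prod_inner hφ (Finset.univ : Finset (Fin (2 * m))) hne 1
    (integrable_abs_pow hφ hφb (by rw [Finset.card_fin]; omega)) v hv
  simp only [pow_one, Finset.card_fin, one_mul] at h1 h2
  push_cast at h2
  have h3 : ∀ g, ‖∏ i, φ ⟪v i, g⟫‖ = ∏ i, |φ ⟪v i, g⟫| := fun g => by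
    rw [Real.norm_eq_abs, Finset.abs_prod]
  refine ⟨h1.mono' (Measurable.aestronglyMeasurable (by fun_prop)) (ae_of_all _ fun g => (h3 g).le), ?_⟩
  rw [← Real.norm_eq_abs]
  exact (norm_integral_le_of_norm_le h1 (ae_of_all _ fun g => (h3 g).le)).trans h2

/-- The sum of the `2m`-th powers of the inner products `⟪V (f s), V (f t)⟫` over the pairs of
positions `s`, `t` of the tuple `f` carrying different indices. -/
noncomputable def offDiag {G : Type*} [DecidableEq G] (m : ℕ) (V : G → E)
    (f : Fin (2 * m) → G) : ℝ :=
  ∑ s, ∑ t, if f s ≠ f t then ⟪V (f s), V (f t)⟫ ^ (2 * m) else 0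

omit [FiniteDimensional ℝ E] [MeasurableSpace E] [BorelSpace E] in
lemma pow_le_offDiag {G : Type*} [DecidableEq G] {m : ℕ} (V : G → E)
    (f : Fin (2 * m) → G) {s t : Fin (2 * m)} (h : f s ≠ f t) :
    ⟪V (f s), V (f t)⟫ ^ (2 * m) ≤ offDiag m V f := by
  have hnn : ∀ s t, 0 ≤ if f s ≠ f t then ⟪V (f s), V (f t)⟫ ^ (2 * m) else 0 := by
    intro s t
    split_ifs
    · exact (even_two_mul m).pow_nonneg _
    · exact le_rfl
  calc ⟪V (f s), V (f t)⟫ ^ (2 * m)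
      = if f s ≠ f t then ⟪V (f s), V (f t)⟫ ^ (2 * m) else 0 := by rw [if_pos h]
    _ ≤ ∑ t, if f s ≠ f t then ⟪V (f s), V (f t)⟫ ^ (2 * m) else 0 :=
        Finset.single_le_sum (f := fun t => if f s ≠ f t then ⟪V (f s), V (f t)⟫ ^ (2 * m) else 0)
          (fun t _ => hnn s t) (Finset.mem_univ t)
    _ ≤ _ := Finset.single_le_sum
          (f := fun s => ∑ t, if f s ≠ f t then ⟪V (f s), V (f t)⟫ ^ (2 * m) else 0)
          (fun s _ => Finset.sum_nonneg fun t _ => hnn s t) (Finset.mem_univ s)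

/-- If one index of the tuple occurs only once, the Gaussian mean of the product is controlled by
the off-diagonal inner products. When all of these are at most `1 / (64 m)`, this is the smoothing
estimate applied to the isolated factor; otherwise it follows from the trivial bound, the
off-diagonal sum being bounded below. -/
lemma abs_integral_prod_le_offDiag {φ : ℝ → ℝ} (hφ : Measurable φ) {m : ℕ} (hm : 1 ≤ m)
    {B : ℝ} (hφb : ∀ x, |φ x| ≤ B * Real.exp (1 / (8 * m) * x ^ 2)) {C : ℝ} (hC : 0 ≤ C)
    (hsm : ∀ r s x : ℝ, 0 ≤ r → r ≤ 1 / 32 → 0 ≤ s → s ^ 2 = 1 - r ^ 2 →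
      |∫ ξ, φ (r * x + s * ξ) ∂(gaussianReal 0 1)| ≤ C * r ^ (2 * m) * Real.exp (x ^ 2 / 16))
    {G : Type*} [DecidableEq G] (V : G → E) (hV : ∀ i, ‖V i‖ = 1) (f : Fin (2 * m) → G)
    (s₀ : Fin (2 * m)) (hs₀ : ∀ s, s ≠ s₀ → f s ≠ f s₀) :
    |∫ g, ∏ i, φ ⟪V (f i), g⟫ ∂(ProbabilityTheory.stdGaussian E)|
      ≤ (C * (4 * m) ^ m * ((1 + ∫ x, Real.exp (1 / 8 * x ^ 2) ∂(gaussianReal 0 1))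
          + 2 * m * ∫ x, |φ x| ^ (2 * (2 * m - 1)) ∂(gaussianReal 0 1))
        + (64 * m) ^ (2 * m) * (2 * m * ∫ x, |φ x| ^ (2 * m) ∂(gaussianReal 0 1)))
        * offDiag m V f := by
  have hmR : (1 : ℝ) ≤ m := by exact_mod_cast hm
  obtain ⟨hint, htriv⟩ := integrable_prod_and_abs_integral_le hφ hm hφb (fun i => V (f i))
    (fun i => hV _)
  set M₁ := ∫ x, Real.exp (1 / 8 * x ^ 2) ∂(gaussianReal 0 1)
  set M₂ := ∫ x, |φ x| ^ (2 * (2 * m - 1)) ∂(gaussianReal 0 1)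
  set M₃ := ∫ x, |φ x| ^ (2 * m) ∂(gaussianReal 0 1)
  have hM₁ : 0 ≤ M₁ := integral_nonneg fun x => (Real.exp_pos _).le
  have hM₂ : 0 ≤ M₂ := integral_nonneg fun x => by positivity
  have hM₃ : 0 ≤ M₃ := integral_nonneg fun x => by positivity
  have hcard : (Finset.univ.erase s₀).card = 2 * m - 1 := by
    rw [Finset.card_erase_of_mem (Finset.mem_univ _), Finset.card_fin]
  have hne : (Finset.univ.erase s₀).Nonempty := by
    rw [← Finset.card_pos, hcard]; omega
  by_cases hsmall : ∀ s t, f s ≠ f t → |⟪V (f s), V (f t)⟫| ≤ 1 / (64 * m)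
  swap
  · push Not at hsmall
    obtain ⟨s, t, hst, hbig⟩ := hsmall
    have h1 : 1 ≤ (64 * m) ^ (2 * m) * offDiag m V f := by
      refine le_trans ?_ (mul_le_mul_of_nonneg_left (pow_le_offDiag V f hst) (by positivity))
      rw [← (even_two_mul m).pow_abs ⟪V (f s), V (f t)⟫, ← mul_pow]
      refine one_le_pow₀ ?_
      rw [div_lt_iff₀ (by positivity)] at hbig
      linarith
    have h0 : 0 ≤ offDiag m V f := le_trans ((even_two_mul m).pow_nonneg _) (pow_le_offDiag V f hst)
    calc _ ≤ 2 * m * M₃ := htriv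
      _ = 0 + 1 * (2 * m * M₃) := by ring
      _ ≤ (C * (4 * m) ^ m * ((1 + M₁) + 2 * m * M₂)) * offDiag m V f
          + ((64 * m) ^ (2 * m) * offDiag m V f) * (2 * m * M₃) := by
          gcongr
          positivity
      _ = _ := by ring
  · set T := (Finset.univ.erase s₀).image f with hT
    have hTcard : (T.card : ℝ) ≤ 2 * m := by
      have : T.card ≤ 2 * m := Finset.card_image_le.trans (by omega)
      exact_mod_cast this
    have hTmem : ∀ t ∈ T, ∃ i, i ≠ s₀ ∧ f i = t := by
      intro t ht
      obtain ⟨i, hi, rfl⟩ := Finset.mem_image.1 ht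
      exact ⟨i, Finset.ne_of_mem_erase hi, rfl⟩
    have hTne : T.Nonempty := hne.image f
    obtain ⟨t₀, ht₀, hmax⟩ := T.exists_max_image (fun t => ⟪V (f s₀), V t⟫ ^ 2) hTne
    obtain ⟨i₀, hi₀, hi₀'⟩ := hTmem t₀ ht₀
    set R := ∑ t ∈ T, ⟪V (f s₀), V t⟫ ^ 2 with hR
    have hR0 : 0 ≤ R := Finset.sum_nonneg fun _ _ => sq_nonneg _
    have hRle : R ≤ 2 * m * ⟪V (f s₀), V t₀⟫ ^ 2 := by
      refine (Finset.sum_le_card_nsmul T _ _ hmax).trans ?_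
      rw [nsmul_eq_mul]
      gcongr
    have hρ : ⟪V (f s₀), V t₀⟫ ^ 2 ≤ (1 / (64 * m)) ^ 2 := by
      rw [← sq_abs]
      gcongr
      rw [← hi₀']
      exact hsmall _ _ (hs₀ i₀ hi₀).symm
    have hR2 : 2 * R ≤ (1 / 32) ^ 2 := by
      calc 2 * R ≤ 2 * (2 * m * (1 / (64 * m)) ^ 2) := by gcongr; exact hRle.trans (by gcongr)
        _ = (1 / 32) ^ 2 * (1 / m) := by field_simp; norm_num
        _ ≤ (1 / 32) ^ 2 * 1 := by
            gcongr
            rw [div_le_one (by positivity)]; exact hmR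
        _ = _ := by ring
    -- The isolated vector has norm `r = O(max |⟪V (f s₀), V t⟫|)` in the span of the others, so the
    -- other factors do not see its remaining component, along `e`.
    obtain ⟨r, s, z, e, hu, he, hz, hez, hr0, hs0, hs2, hVe, hrR⟩ :=
      exists_orthogonal_decomposition T V (ε := 1 / (64 * m)) (by positivity)
        (by
          calc 1 / (64 * m) * (T.card : ℝ) ≤ 1 / (64 * m) * (2 * m) := by gcongr
            _ = 1 / 32 := by field_simp; norm_num
            _ ≤ 1 / 2 := by norm_num) (fun t _ => hV t)
        (fun s hs t ht hst => by
          obtain ⟨i, -, rfl⟩ := hTmem s hs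
          obtain ⟨j, -, rfl⟩ := hTmem t ht
          exact hsmall i j hst) (hV (f s₀)) (by rw [← hR]; linarith)
    have hr32 : r ≤ 1 / 32 :=
      (sq_le_sq₀ hr0 (by norm_num)).1 (hrR.trans hR2)
    obtain ⟨hH1, hH2⟩ := integrable_prod_inner hφ (Finset.univ.erase s₀) hne 2
      (integrable_abs_pow hφ hφb (by rw [hcard]; omega)) (fun i => V (f i)) (fun i => hV _)
    rw [hcard] at hH2
    have hsq : ∀ g, ∏ i ∈ Finset.univ.erase s₀, |φ ⟪V (f i), g⟫| ^ 2
        = (∏ i ∈ Finset.univ.erase s₀, φ ⟪V (f i), g⟫) ^ 2 := by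
      intro g
      simp only [sq_abs, Finset.prod_pow]
    simp only [hsq] at hH1 hH2
    have hprod : ∀ g, φ ⟪V (f s₀), g⟫ * ∏ i ∈ Finset.univ.erase s₀, φ ⟪V (f i), g⟫
        = ∏ i, φ ⟪V (f i), g⟫ := fun g =>
      Finset.mul_prod_erase _ (fun i => φ ⟪V (f i), g⟫) (Finset.mem_univ s₀)
    have hmain := abs_integral_le_of_smoothing hφ
      (fun x => hsm r s x hr0 hr32 hs0 hs2) hu he hez hz
      (H := fun g => ∏ i ∈ Finset.univ.erase s₀, φ ⟪V (f i), g⟫)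
      (fun g c => Finset.prod_congr rfl fun i hi => by
        rw [inner_add_right, inner_smul_right, hVe _ (Finset.mem_image_of_mem f hi), mul_zero,
          add_zero])
      (by fun_prop) (by simpa only [hprod] using hint) hH1
    simp only [hprod] at hmain
    have hrpow : r ^ (2 * m) ≤ (4 * m) ^ m * offDiag m V f := by
      calc r ^ (2 * m) = (r ^ 2) ^ m := pow_mul _ _ _
        _ ≤ (4 * m * ⟪V (f s₀), V t₀⟫ ^ 2) ^ m := by gcongr; linarith
        _ = (4 * m) ^ m * ⟪V (f s₀), V t₀⟫ ^ (2 * m) := by rw [mul_pow, ← pow_mul]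
        _ ≤ _ := by
          gcongr
          rw [← hi₀']
          exact pow_le_offDiag V f (hs₀ i₀ hi₀).symm
    have h0 : 0 ≤ offDiag m V f :=
      le_trans ((even_two_mul m).pow_nonneg _) (pow_le_offDiag V f (hs₀ i₀ hi₀).symm)
    have hH2' : ∫ g, (∏ i ∈ Finset.univ.erase s₀, φ ⟪V (f i), g⟫) ^ 2
        ∂(ProbabilityTheory.stdGaussian E) ≤ 2 * m * M₂ := by
      refine hH2.trans ?_
      gcongr
      have : 2 * m - 1 ≤ 2 * m := Nat.sub_le _ _
      exact_mod_cast this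
    calc _ ≤ _ := hmain
      _ ≤ C * ((4 * m) ^ m * offDiag m V f) * ((1 + M₁) + 2 * m * M₂) + 0 := by
          rw [add_zero]
          gcongr
      _ ≤ C * ((4 * m) ^ m * offDiag m V f) * ((1 + M₁) + 2 * m * M₂)
          + (64 * m) ^ (2 * m) * (2 * m * M₃) * offDiag m V f := by
          gcongr
          positivity
      _ = _ := by ring

end Products

/-! ### Counting tuples -/

section Counting
variable {G : Type*} [AddCommGroup G] [Fintype G] [DecidableEq G]

/-- Two solutions of `f (p s) = f s + κ s` differ by a function constant on the orbits of `p`, and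
every orbit has at least two elements when `p` has no fixed point. -/
lemma card_solutions_le (m : ℕ) (p : Fin (2 * m) → Fin (2 * m)) (hp : ∀ s, p s ≠ s)
    (κ : Fin (2 * m) → G) :
    (Finset.univ.filter fun f : Fin (2 * m) → G => ∀ s, f (p s) - f s = κ s).card
      ≤ Fintype.card G ^ m := by
  classical
  rcases (Finset.univ.filter fun f : Fin (2 * m) → G =>
    ∀ s, f (p s) - f s = κ s).eq_empty_or_nonempty with h | ⟨f₀, hf₀⟩
  · rw [h]; simp
  have hf₀' : ∀ s, f₀ (p s) - f₀ s = κ s := (Finset.mem_filter.1 hf₀).2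
  -- The set of orbits of `p`; both `x` and `p x` lie over the orbit of `x`.
  let R : Fin (2 * m) → Fin (2 * m) → Prop := fun a b => b = p a
  let Q := Quot R
  have : Fintype Q := Fintype.ofSurjective (Quot.mk R) Quot.mk_surjective
  have hQ : Fintype.card Q ≤ m := by
    have hmk : ∀ a : Fin (2 * m), Quot.mk R (p a) = Quot.mk R a :=
      fun a => (Quot.sound (r := R) rfl).symm
    have hout : ∀ q : Q, Quot.mk _ (Quot.out q) = q := Quot.out_eq
    have hinj : Function.Injective
        (fun x : Q × Bool => if x.2 then p (Quot.out x.1) else Quot.out x.1) := by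
      have key : ∀ x : Q × Bool,
          (Quot.mk _ (if x.2 then p (Quot.out x.1) else Quot.out x.1) : Q) = x.1 := by
        rintro ⟨q, b⟩
        cases b
        · simp
        · simpa using (hmk _).trans (hout q)
      rintro ⟨q, b⟩ ⟨q', b'⟩ h
      have hq : q = q' := by
        exact (key (q, b)).symm.trans ((congrArg (Quot.mk R) h).trans (key (q', b')))
      subst hq
      have := hp (Quot.out q)
      cases b <;> cases b'
      · rfl
      · exact absurd h.symm this
      · exact absurd h this
      · rfl
    have := Fintype.card_le_of_injective _ hinj
    rw [Fintype.card_prod, Fintype.card_bool, Fintype.card_fin] at this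
    omega
  have hlift : ∀ f ∈ Finset.univ.filter (fun f : Fin (2 * m) → G => ∀ s, f (p s) - f s = κ s),
      ∀ a b : Fin (2 * m), b = p a → f a - f₀ a = f b - f₀ b := by
    rintro f hf a b rfl
    have h1 := (Finset.mem_filter.1 hf).2 a
    rw [← hf₀' a] at h1
    rw [sub_eq_sub_iff_add_eq_add] at h1 ⊢
    rw [add_comm (f a), ← h1, add_comm]
  have hcard : Fintype.card (Q → G) ≤ Fintype.card G ^ m := by
    rw [Fintype.card_fun]
    exact Nat.pow_le_pow_right (Fintype.card_pos_iff.2 ⟨0⟩) hQ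
  refine le_trans ?_ hcard
  rw [← Fintype.card_coe]
  refine Fintype.card_le_of_injective
    (fun (f : (Finset.univ.filter
      (fun f : Fin (2 * m) → G => ∀ s, f (p s) - f s = κ s) : Finset _)) (q : Q) => Quot.lift (fun a => f.1 a - f₀ a) (hlift f.1 f.2) q) fun f g h => ?_
  ext a
  have := congrFun h (Quot.mk R a)
  simpa using this

/-- At most `C |G| ^ m` tuples have no isolated entry, where `f s` is isolated if no entry at
another position lies in `f s + K`. -/
lemma card_no_isolated_le (m : ℕ) (K : Finset G) :
    (Finset.univ.filter fun f : Fin (2 * m) → G => ∀ s, ∃ t, t ≠ s ∧ f t - f s ∈ K).card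
      ≤ (2 * m * K.card) ^ (2 * m) * Fintype.card G ^ m := by
  classical
  set P := (Finset.univ.filter fun p : Fin (2 * m) → Fin (2 * m) => ∀ s, p s ≠ s) ×ˢ
    Fintype.piFinset (fun _ : Fin (2 * m) => K) with hP
  have hPcard : P.card ≤ (2 * m * K.card) ^ (2 * m) := by
    rw [hP, Finset.card_product, mul_pow]
    refine Nat.mul_le_mul ((Finset.card_filter_le _ _).trans ?_) ?_ <;> simp
  have hsub : (Finset.univ.filter fun f : Fin (2 * m) → G => ∀ s, ∃ t, t ≠ s ∧ f t - f s ∈ K)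
      ⊆ P.biUnion fun x => Finset.univ.filter fun f => ∀ s, f (x.1 s) - f s = x.2 s := by
    intro f hf
    have h := (Finset.mem_filter.1 hf).2
    choose p hp hpK using h
    refine Finset.mem_biUnion.2 ⟨(p, fun s => f (p s) - f s), ?_, ?_⟩
    · simp only [hP, Finset.mem_product, Finset.mem_filter, Finset.mem_univ, true_and,
        Fintype.mem_piFinset]
      exact ⟨hp, hpK⟩
    · simp
  refine (Finset.card_le_card hsub).trans ?_
  refine (Finset.card_biUnion_le_card_mul _ _ (Fintype.card G ^ m) fun x hx => ?_).trans
    (Nat.mul_le_mul_right _ hPcard)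
  refine card_solutions_le m x.1 ?_ x.2
  simp only [hP, Finset.mem_product, Finset.mem_filter] at hx
  exact hx.1.2

end Counting

/-! ### Moments of the uniform measure on the sphere -/

/-- A sum over tuples with a bound `X` in general and a better bound `Y` for the tuples having an
isolated entry. -/
lemma sum_tuples_le {G : Type*} [AddCommGroup G] [Fintype G] [DecidableEq G] (m : ℕ)
    (K : Finset G) (a : (Fin (2 * m) → G) → ℝ) {X Y : ℝ} (hX0 : 0 ≤ X) (hY0 : 0 ≤ Y)
    (hX : ∀ f, a f ≤ X)
    (hY : ∀ f s, (∀ t, t ≠ s → f t - f s ∉ K) → a f ≤ Y) :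
    ∑ f, a f ≤ (2 * m * K.card) ^ (2 * m) * (Fintype.card G) ^ m * X
      + (Fintype.card G) ^ (2 * m) * Y := by
  rw [← Finset.sum_filter_add_sum_filter_not Finset.univ
    (fun f : Fin (2 * m) → G => ∀ s, ∃ t, t ≠ s ∧ f t - f s ∈ K)]
  refine add_le_add ?_ ?_
  · refine (Finset.sum_le_card_nsmul _ _ X fun f _ => hX f).trans ?_
    rw [nsmul_eq_mul]
    refine mul_le_mul_of_nonneg_right ?_ hX0
    exact_mod_cast card_no_isolated_le m K
  · refine (Finset.sum_le_card_nsmul _ _ Y fun f hf => ?_).trans ?_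
    · have h := (Finset.mem_filter.1 hf).2
      push Not at h
      obtain ⟨s, hs⟩ := h
      exact hY f s hs
    · rw [nsmul_eq_mul]
      refine mul_le_mul_of_nonneg_right ?_ hY0
      have : (Finset.univ.filter fun f : Fin (2 * m) → G =>
          ¬ ∀ s, ∃ t, t ≠ s ∧ f t - f s ∈ K).card ≤ Fintype.card G ^ (2 * m) := by
        refine (Finset.card_filter_le _ _).trans ?_
        rw [Finset.card_univ, Fintype.card_fun, Fintype.card_fin]
      exact_mod_cast this

section Sphere
variable {d : ℕ} {μ : Measure (Fin d → ℝ)}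

lemma IsUniformOnSphere.ae_sum_sq (hμ : IsUniformOnSphere d 1 μ) :
    ∀ᵐ w ∂μ, ∑ i, w i ^ 2 = 1 := by
  have h := hμ.2.1
  rw [one_pow] at h
  exact ae_iff.2 h

lemma IsUniformOnSphere.ae_abs_le (hμ : IsUniformOnSphere d 1 μ) :
    ∀ᵐ w ∂μ, ∀ i, |w i| ≤ 1 := by
  filter_upwards [hμ.ae_sum_sq] with w hw i
  rw [← sq_le_one_iff_abs_le_one, ← hw]
  exact Finset.single_le_sum (f := fun i => w i ^ 2) (fun i _ => sq_nonneg _) (Finset.mem_univ i)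

/-- Orthogonal maps preserve the uniform measure. -/
lemma IsUniformOnSphere.integral_comp (hμ : IsUniformOnSphere d 1 μ)
    (T : (Fin d → ℝ) →ₗ[ℝ] (Fin d → ℝ))
    (hT : ∀ x y : Fin d → ℝ, ∑ i, T x i * T y i = ∑ i, x i * y i) {F : (Fin d → ℝ) → ℝ}
    (hF : Measurable F) : ∫ w, F (T w) ∂μ = ∫ w, F w ∂μ := by
  have hTm : Measurable T := T.continuous_of_finiteDimensional.measurable
  conv_rhs => rw [← hμ.2.2 T hT]
  rw [integral_map hTm.aemeasurable hF.aestronglyMeasurable]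

/-- The moments of `⟪w, g⟫` for uniform `w` depend on `g` only through its norm, since a reflection
carries `g` onto the `i`-th coordinate axis. -/
lemma IsUniformOnSphere.integral_inner_pow (hμ : IsUniformOnSphere d 1 μ) (i : Fin d) (n : ℕ)
    (g : EuclideanSpace ℝ (Fin d)) :
    ∫ w, ⟪WithLp.toLp 2 w, g⟫ ^ n ∂μ = ‖g‖ ^ n * ∫ w, w i ^ n ∂μ := by
  set e : EuclideanSpace ℝ (Fin d) := ‖g‖ • EuclideanSpace.single i 1 with he
  have hnorm : ‖g‖ = ‖e‖ := by simp [he, norm_smul]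
  set R := (ℝ ∙ (g - e))ᗮ.reflection with hR
  have hRg : R g = e := Submodule.reflection_sub hnorm
  let T : (Fin d → ℝ) →ₗ[ℝ] (Fin d → ℝ) :=
    (WithLp.linearEquiv 2 ℝ (Fin d → ℝ)).toLinearMap ∘ₗ R.toLinearEquiv.toLinearMap ∘ₗ
      (WithLp.linearEquiv 2 ℝ (Fin d → ℝ)).symm.toLinearMap
  have hTR : ∀ x, WithLp.toLp 2 (T x) = R (WithLp.toLp 2 x) := fun x => rfl
  have hinner : ∀ x y : Fin d → ℝ,
      ∑ i, x i * y i = ⟪(WithLp.toLp 2 x : EuclideanSpace ℝ (Fin d)), WithLp.toLp 2 y⟫ := by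
    intro x y
    simp [PiLp.inner_apply, mul_comm]
  have hT : ∀ x y : Fin d → ℝ, ∑ i, T x i * T y i = ∑ i, x i * y i := by
    intro x y
    rw [hinner, hinner, hTR, hTR, LinearIsometryEquiv.inner_map_map]
  have key : ∀ w : Fin d → ℝ, ⟪WithLp.toLp 2 w, g⟫ = ‖g‖ * T w i := by
    intro w
    rw [← LinearIsometryEquiv.inner_map_map R, hRg, ← hTR, he, inner_smul_right]
    simp [PiLp.inner_apply]
  simp only [key, mul_pow]
  rw [integral_const_mul, hμ.integral_comp T hT (F := fun w => w i ^ n) (by fun_prop)]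

lemma integral_norm_sq_stdGaussian :
    Integrable (fun g : EuclideanSpace ℝ (Fin d) => ‖g‖ ^ 2) (ProbabilityTheory.stdGaussian _) ∧
    ∫ g : EuclideanSpace ℝ (Fin d), ‖g‖ ^ 2 ∂(ProbabilityTheory.stdGaussian _) = d := by
  have hsq : Integrable (fun x : ℝ => x ^ 2) (gaussianReal 0 1) := by
    have h := integrable_poly_gaussian (Polynomial.X ^ 2)
    simp only [Polynomial.eval_pow, Polynomial.eval_X] at h
    exact h
  have hone : ∫ x, x ^ 2 ∂(gaussianReal 0 1) = 1 := by
    have h := variance_id_gaussianReal (μ := 0) (v := 1)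
    rw [variance_eq_integral (by fun_prop)] at h
    simpa using h
  have hnorm : ∀ g : EuclideanSpace ℝ (Fin d),
      ‖g‖ ^ 2 = ∑ i, ⟪EuclideanSpace.single i (1 : ℝ), g⟫ ^ 2 := by
    intro g
    simp [EuclideanSpace.norm_sq_eq, EuclideanSpace.inner_single_left]
  have hint : ∀ i ∈ Finset.univ, Integrable (fun g : EuclideanSpace ℝ (Fin d) =>
      ⟪EuclideanSpace.single i (1 : ℝ), g⟫ ^ 2) (ProbabilityTheory.stdGaussian _) :=
    fun i _ => integrable_inner_stdGaussian (f := fun x => x ^ 2) (by simp) (by fun_prop) hsq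
  simp only [hnorm]
  refine ⟨integrable_finsetSum _ hint, ?_⟩
  rw [integral_finsetSum _ hint]
  simp [fun i : Fin d => integral_inner_stdGaussian (E := EuclideanSpace ℝ (Fin d))
    (u := EuclideanSpace.single i (1 : ℝ)) (f := fun x => x ^ 2) (by simp) (by fun_prop), hone]

lemma integrable_norm_pow_stdGaussian (n : ℕ) :
    Integrable (fun g : EuclideanSpace ℝ (Fin d) => ‖g‖ ^ n)
      (ProbabilityTheory.stdGaussian _) := 
  (IsGaussian.memLp_id (ProbabilityTheory.stdGaussian (EuclideanSpace ℝ (Fin d))) n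
    (by simp)).integrable_norm_pow'

/-- The moments of one coordinate of a uniform vector are at most those of a normal variable of
variance `1 / d`: compute `E ⟪w, g⟫ ^ (2 p)` for an independent standard Gaussian `g` in the two
possible orders, with `E ‖g‖ ^ (2 p) ≥ d ^ p`. -/
lemma IsUniformOnSphere.integral_coord_pow_le (hμ : IsUniformOnSphere d 1 μ) (i : Fin d) (p : ℕ) :
    ∫ w, w i ^ (2 * p) ∂μ ≤ (∫ x, x ^ (2 * p) ∂(gaussianReal 0 1)) / d ^ p := by
  have := hμ.1
  have hd : (0 : ℝ) < d := by exact_mod_cast i.pos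
  set A := ∫ w, w i ^ (2 * p) ∂μ with hA
  have hA0 : 0 ≤ A := integral_nonneg fun w => (even_two_mul p).pow_nonneg _
  obtain ⟨hi2, hE2⟩ := integral_norm_sq_stdGaussian (d := d)
  have hip := integrable_norm_pow_stdGaussian (d := d) (2 * p)
  -- Bernoulli's inequality for `‖g‖ ^ 2 / d`
  have hlow : (d : ℝ) ^ p ≤
      ∫ g : EuclideanSpace ℝ (Fin d), ‖g‖ ^ (2 * p) ∂(ProbabilityTheory.stdGaussian _) := by
    have h1 : ∀ g : EuclideanSpace ℝ (Fin d),
        d ^ p * (1 - p) + d ^ p * p / d * ‖g‖ ^ 2 ≤ ‖g‖ ^ (2 * p) := by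
      intro g
      have hb := one_add_mul_le_pow (a := ‖g‖ ^ 2 / d - 1)
        (by have : 0 ≤ ‖g‖ ^ 2 / d := by positivity
            linarith) p
      calc d ^ p * (1 - p) + d ^ p * p / d * ‖g‖ ^ 2
          = (d : ℝ) ^ p * (1 + p * (‖g‖ ^ 2 / d - 1)) := by ring
        _ ≤ (d : ℝ) ^ p * (1 + (‖g‖ ^ 2 / d - 1)) ^ p := by gcongr
        _ = ‖g‖ ^ (2 * p) := by
          rw [← mul_pow, pow_mul]
          congr 1
          field_simp
          ring
    have h2 : Integrable (fun g : EuclideanSpace ℝ (Fin d) => (d : ℝ) ^ p * p / d * ‖g‖ ^ 2)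
        (ProbabilityTheory.stdGaussian _) := hi2.const_mul _
    refine le_trans (le_of_eq ?_) (integral_mono ((integrable_const _).add h2) hip h1)
    rw [integral_add' (integrable_const _) h2, integral_const, integral_const_mul, hE2]
    simp only [probReal_univ, one_smul]
    field_simp
    ring
  have hF : Integrable (Function.uncurry fun (w : Fin d → ℝ) (g : EuclideanSpace ℝ (Fin d)) =>
      ⟪WithLp.toLp 2 w, g⟫ ^ (2 * p)) (μ.prod (ProbabilityTheory.stdGaussian _)) := by
    refine (hip.comp_snd μ).mono' (Measurable.aestronglyMeasurable ?_) ?_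
    · unfold Function.uncurry
      fun_prop
    · have h1 : ∀ᵐ q ∂(μ.prod (ProbabilityTheory.stdGaussian (EuclideanSpace ℝ (Fin d)))),
          ∑ j, q.1 j ^ 2 = 1 := Measure.quasiMeasurePreserving_fst.ae hμ.ae_sum_sq
      filter_upwards [h1] with q hq
      have hu : ‖(WithLp.toLp 2 q.1 : EuclideanSpace ℝ (Fin d))‖ = 1 := by
        rw [EuclideanSpace.norm_eq]; simp [hq]
      simp only [Function.uncurry, norm_pow]
      gcongr
      simpa [hu] using norm_inner_le_norm (𝕜 := ℝ)
        (WithLp.toLp 2 q.1 : EuclideanSpace ℝ (Fin d)) q.2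
  have hswap := integral_integral_swap hF
  simp only [fun g => hμ.integral_inner_pow i (2 * p) g] at hswap
  rw [integral_mul_const, ← hA] at hswap
  have hleft : ∫ w, ∫ g, ⟪(WithLp.toLp 2 w : EuclideanSpace ℝ (Fin d)), g⟫ ^ (2 * p)
      ∂(ProbabilityTheory.stdGaussian _) ∂μ = ∫ x, x ^ (2 * p) ∂(gaussianReal 0 1) := by
    rw [integral_congr_ae (g := fun _ => ∫ x, x ^ (2 * p) ∂(gaussianReal 0 1))]
    · simp
    · filter_upwards [hμ.ae_sum_sq] with w hw
      have hu : ‖(WithLp.toLp 2 w : EuclideanSpace ℝ (Fin d))‖ = 1 := by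
        rw [EuclideanSpace.norm_eq]; simp [hw]
      exact integral_inner_stdGaussian (f := fun x => x ^ (2 * p)) hu (by fun_prop)
  rw [hleft] at hswap
  rw [hswap, le_div_iff₀ (by positivity), mul_comm]
  gcongr

/-- A function that is odd in the coordinate `j` has mean zero, by invariance under the reflection
in the `j`-th coordinate. -/
lemma IsUniformOnSphere.integral_eq_zero_of_flip (hμ : IsUniformOnSphere d 1 μ) (j : Fin d)
    {F : (Fin d → ℝ) → ℝ} (hF : Measurable F)
    (hflip : ∀ w, F (fun i => (if i = j then -1 else 1) * w i) = -F w) : ∫ w, F w ∂μ = 0 := by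
  let T : (Fin d → ℝ) →ₗ[ℝ] (Fin d → ℝ) :=
    LinearMap.pi fun i => (if i = j then (-1 : ℝ) else 1) • LinearMap.proj i
  have hTw : ∀ w, T w = fun i => (if i = j then -1 else 1) * w i := by
    intro w
    ext i
    simp only [T, LinearMap.pi_apply, LinearMap.smul_apply, LinearMap.proj_apply, smul_eq_mul]
  have h := hμ.integral_comp T (fun x y => Finset.sum_congr rfl fun i _ => by
    rw [hTw, hTw]
    dsimp only
    split_ifs <;> ring) hF
  simp only [hTw, hflip, integral_neg] at h
  linarith

/-- The cyclic autocorrelations of a uniform vector are of order `d ^ (-1/2)` in `L^{2m}`. In the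
expanded power, a tuple with an isolated index has mean zero by a sign flip, and the others are
few. -/
lemma IsUniformOnSphere.integral_autocorrelation_pow_le [NeZero d] (hμ : IsUniformOnSphere d 1 μ)
    {m : ℕ} (hm : 1 ≤ m) {k : Fin d} (hk : k ≠ 0) :
    ∫ w, (∑ j, w j * w (j + k)) ^ (2 * m) ∂μ
      ≤ (4 * m) ^ (2 * m) * (4 * m * ∫ x, x ^ (4 * m) ∂(gaussianReal 0 1)) / d ^ m := by
  have := hμ.1
  have hd : (0 : ℝ) < d := by exact_mod_cast Nat.pos_of_ne_zero (NeZero.ne d)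
  set M := ∫ x, x ^ (4 * m) ∂(gaussianReal 0 1) with hM
  have hM0 : 0 ≤ M := integral_nonneg fun x => Even.pow_nonneg ⟨2 * m, by ring⟩ _
  have hint : ∀ f ∈ (Finset.univ : Finset (Fin (2 * m) → Fin d)),
      Integrable (fun w : Fin d → ℝ => ∏ s, (w (f s) * w (f s + k))) μ := by
    intro f _
    refine Integrable.of_bound (Measurable.aestronglyMeasurable (by fun_prop)) 1 ?_
    filter_upwards [hμ.ae_abs_le] with w hw
    rw [Real.norm_eq_abs, Finset.abs_prod]
    refine Finset.prod_le_one (fun _ _ => abs_nonneg _) fun s _ => ?_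
    rw [abs_mul]
    exact mul_le_one₀ (hw _) (abs_nonneg _) (hw _)
  have hexp : ∀ w : Fin d → ℝ, (∑ j, w j * w (j + k)) ^ (2 * m)
      = ∑ f : Fin (2 * m) → Fin d, ∏ s, (w (f s) * w (f s + k)) := fun w =>
    Fintype.sum_pow _ _
  simp only [hexp]
  rw [integral_finsetSum _ hint]
  have hK : ((({0, -k} : Finset (Fin d)).card : ℕ) : ℝ) ≤ 2 := by
    exact_mod_cast Finset.card_le_two
  have hmom : ∀ i, Integrable (fun w : Fin d → ℝ => w i ^ (4 * m)) μ := by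
    intro i
    refine Integrable.of_bound (Measurable.aestronglyMeasurable (by fun_prop)) 1 ?_
    filter_upwards [hμ.ae_abs_le] with w hw
    rw [norm_pow]
    exact pow_le_one₀ (norm_nonneg _) (hw i)
  have hmomle : ∀ i, ∫ w, w i ^ (4 * m) ∂μ ≤ M / d ^ (2 * m) := by
    intro i
    have h := hμ.integral_coord_pow_le i (2 * m)
    rwa [← mul_assoc] at h
  -- For `K = {0, -k}`, an entry `f s` is isolated when the coordinate `w (f s)` occurs exactly once
  -- among the `4m` factors.
  refine (sum_tuples_le m {0, -k} _ (X := 4 * m * M / d ^ (2 * m)) (Y := 0) (by positivity) le_rfl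
    (fun f => ?_) (fun f s hs => le_of_eq ?_)).trans ?_
  · have hle : ∀ w : Fin d → ℝ, ∏ s, (w (f s) * w (f s + k))
        ≤ ∑ s, (w (f s) ^ (4 * m) + w (f s + k) ^ (4 * m)) := by
      intro w
      refine (le_abs_self _).trans ?_
      rw [Finset.abs_prod]
      refine (prod_le_sum_pow_card Finset.univ ⟨⟨0, by omega⟩, Finset.mem_univ _⟩ _
        fun _ => abs_nonneg _).trans (Finset.sum_le_sum fun s _ => ?_)
      rw [Finset.card_fin, (even_two_mul m).pow_abs, mul_pow]
      have e1 : ∀ x : ℝ, x ^ (4 * m) = (x ^ (2 * m)) ^ 2 := fun x => by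
        rw [← pow_mul]; congr 1; ring
      rw [e1, e1]
      nlinarith [sq_nonneg (w (f s) ^ (2 * m) - w (f s + k) ^ (2 * m)),
        sq_nonneg (w (f s) ^ (2 * m)), sq_nonneg (w (f s + k) ^ (2 * m))]
    have hi : ∀ s ∈ (Finset.univ : Finset (Fin (2 * m))), Integrable
        (fun w : Fin d → ℝ => w (f s) ^ (4 * m) + w (f s + k) ^ (4 * m)) μ :=
      fun s _ => (hmom _).add (hmom _)
    refine (integral_mono (hint f (Finset.mem_univ f)) (integrable_finsetSum _ hi) hle).trans ?_
    rw [integral_finsetSum _ hi]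
    calc ∑ s, ∫ w, (w (f s) ^ (4 * m) + w (f s + k) ^ (4 * m)) ∂μ
        ≤ ∑ _s : Fin (2 * m), (M / d ^ (2 * m) + M / d ^ (2 * m)) := by
          refine Finset.sum_le_sum fun s _ => ?_
          rw [integral_add (hmom _) (hmom _)]
          exact add_le_add (hmomle _) (hmomle _)
      _ = _ := by
          rw [Finset.sum_const, Finset.card_fin, nsmul_eq_mul]
          push_cast
          ring
  · refine hμ.integral_eq_zero_of_flip (f s) (by fun_prop) fun w => ?_
    have hrest : ∀ t, t ≠ s → f t ≠ f s ∧ f t + k ≠ f s := by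
      intro t ht
      have h := hs t ht
      rw [Finset.mem_insert, Finset.mem_singleton, not_or, sub_eq_zero] at h
      refine ⟨h.1, fun h' => h.2 ?_⟩
      rw [← h']; abel
    rw [← Finset.mul_prod_erase _ _ (Finset.mem_univ s),
      ← Finset.mul_prod_erase (a := s) _ _ (Finset.mem_univ s),
      Finset.prod_congr rfl (g := fun t => w (f t) * w (f t + k))]
    · have : f s + k ≠ f s := by simpa using hk
      simp [this]
    · intro t ht
      have h := hrest t (Finset.ne_of_mem_erase ht)
      simp [h.1, h.2]
  · rw [Fintype.card_fin, mul_zero, add_zero]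
    calc (2 * m * (({0, -k} : Finset (Fin d)).card : ℝ)) ^ (2 * m) * d ^ m
          * (4 * m * M / d ^ (2 * m))
        ≤ (2 * m * 2) ^ (2 * m) * d ^ m * (4 * m * M / d ^ (2 * m)) := by gcongr
      _ = _ := by
        rw [two_mul m, pow_add (d : ℝ)]
        field_simp
        ring

end Sphere

/-! ### The cyclic average -/

section Assembly
variable {d : ℕ}

/-- The cyclic shift `Lⁱ w` of `w` by `i` coordinates, as a vector of the Euclidean space. -/
def cyclicShift [NeZero d] (w : Fin d → ℝ) (i : Fin d) : EuclideanSpace ℝ (Fin d) :=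
  WithLp.toLp 2 fun j => w (j + i)

lemma inner_cyclicShift [NeZero d] (w : Fin d → ℝ) (a b : Fin d) :
    ⟪cyclicShift w a, cyclicShift w b⟫ = ∑ j, w j * w (j + (b - a)) := by
  rw [← Equiv.sum_comp (Equiv.addRight a)]
  simp only [cyclicShift, PiLp.inner_apply, RCLike.inner_apply, conj_trivial,
    Equiv.coe_addRight]
  refine Finset.sum_congr rfl fun j _ => ?_
  rw [mul_comm, add_assoc, add_sub_cancel]

lemma norm_cyclicShift [NeZero d] {w : Fin d → ℝ} (hw : ∑ i, w i ^ 2 = 1) (a : Fin d) :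
    ‖cyclicShift w a‖ = 1 := by
  have h := inner_cyclicShift w a a
  simp only [sub_self, add_zero, ← sq, hw] at h
  rw [real_inner_self_eq_norm_sq] at h
  exact (pow_eq_one_iff_of_nonneg (norm_nonneg _) two_ne_zero).1 h

lemma sum_mul_shift [NeZero d] (g w : Fin d → ℝ) (i : Fin d) :
    ∑ j, g j * w (j + i) = ⟪cyclicShift w i, WithLp.toLp 2 g⟫ := by
  simp [cyclicShift, PiLp.inner_apply]

/-- The product of standard normal laws is the standard Gaussian law of the Euclidean space. -/
lemma measurePreserving_toLp :
    MeasurePreserving (WithLp.toLp 2 : (Fin d → ℝ) → EuclideanSpace ℝ (Fin d))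
      (_root_.stdGaussian d) (ProbabilityTheory.stdGaussian (EuclideanSpace ℝ (Fin d))) :=
  ⟨by fun_prop, ProbabilityTheory.map_pi_eq_stdGaussian⟩

instance : IsProbabilityMeasure (_root_.stdGaussian d) := by
  unfold _root_.stdGaussian; infer_instance

/-- The `2m`-th moment of the cyclic average is `O(d ^ (-m))` for every `φ` of the stated growth
whose Gaussian smoothings at correlation `r` are of size `O(r ^ (2m))`. -/
lemma integral_cyclic_average_pow_le {φ : ℝ → ℝ} (hφ : Measurable φ) {m : ℕ} (hm : 1 ≤ m)
    {B : ℝ} (hφb : ∀ x, |φ x| ≤ B * Real.exp (1 / (8 * m) * x ^ 2)) {C : ℝ} (hC : 0 ≤ C)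
    (hsm : ∀ r s x : ℝ, 0 ≤ r → r ≤ 1 / 32 → 0 ≤ s → s ^ 2 = 1 - r ^ 2 →
      |∫ ξ, φ (r * x + s * ξ) ∂(gaussianReal 0 1)| ≤ C * r ^ (2 * m) * Real.exp (x ^ 2 / 16)) :
    ∃ D : ℝ, 0 ≤ D ∧ ∀ d : ℕ, 1 ≤ d → ∀ μ : Measure (Fin d → ℝ), IsUniformOnSphere d 1 μ →
      ∫ p : (Fin d → ℝ) × (Fin d → ℝ),
        ((1 / d : ℝ) * ∑ i : Fin d, φ (∑ j, p.1 j * p.2 (j + i))) ^ (2 * m)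
        ∂((_root_.stdGaussian d).prod μ) ≤ D / d ^ m := by
  set M := ∫ x, |φ x| ^ (2 * m) ∂(gaussianReal 0 1) with hM
  have hM0 : 0 ≤ M := integral_nonneg fun x => by positivity
  have hint : Integrable (fun x => |φ x| ^ (2 * m)) (gaussianReal 0 1) :=
    integrable_abs_pow hφ hφb (by omega)
  obtain ⟨Q, hQ0, hQ⟩ : ∃ Q : ℝ, 0 ≤ Q ∧ ∀ d : ℕ, 1 ≤ d → ∀ V : Fin d → EuclideanSpace ℝ (Fin d),
      (∀ i, ‖V i‖ = 1) → ∀ f : Fin (2 * m) → Fin d, ∀ s₀, (∀ s, s ≠ s₀ → f s ≠ f s₀) →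
      |∫ g, ∏ i, φ ⟪V (f i), g⟫ ∂(ProbabilityTheory.stdGaussian _)| ≤ Q * offDiag m V f := by
    refine ⟨_, ?_, fun d _ V hV f s₀ hs₀ =>
      abs_integral_prod_le_offDiag hφ hm hφb hC hsm V hV f s₀ hs₀⟩
    have : 0 ≤ ∫ x, Real.exp (1 / 8 * x ^ 2) ∂(gaussianReal 0 1) :=
      integral_nonneg fun x => (Real.exp_pos _).le
    have : 0 ≤ ∫ x, |φ x| ^ (2 * (2 * m - 1)) ∂(gaussianReal 0 1) :=
      integral_nonneg fun x => by positivity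
    positivity
  set A : ℝ := (4 * m) ^ (2 * m) * (4 * m * ∫ x, x ^ (4 * m) ∂(gaussianReal 0 1)) with hA
  have hA0 : 0 ≤ A := by
    have : 0 ≤ ∫ x, x ^ (4 * m) ∂(gaussianReal 0 1) :=
      integral_nonneg fun x => Even.pow_nonneg ⟨2 * m, by ring⟩ _
    positivity
  refine ⟨(2 * m) ^ (2 * m) * (2 * m * M) + Q * ((2 * m) ^ 2 * A), by positivity,
    fun d hd μ hμ => ?_⟩
  have : NeZero d := ⟨by omega⟩
  have := hμ.1
  have hdR : (0 : ℝ) < d := by exact_mod_cast hd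
  let Φ : (Fin (2 * m) → Fin d) → (Fin d → ℝ) × (Fin d → ℝ) → ℝ :=
    fun f p => ∏ s, φ (∑ j, p.1 j * p.2 (j + f s))
  have hΦm : ∀ f, Measurable (Φ f) := fun f => by fun_prop
  have hΦw : ∀ f w g, Φ f (g, w) = ∏ s, φ ⟪cyclicShift w (f s), WithLp.toLp 2 g⟫ := by
    intro f w g
    simp only [Φ, sum_mul_shift]
  have hprodm : ∀ (f : Fin (2 * m) → Fin d) (w : Fin d → ℝ), Measurable
      fun g => ∏ s, φ ⟪cyclicShift w (f s), g⟫ := fun f w => by fun_prop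
  have hΦE : ∀ f w, ∫ g, Φ f (g, w) ∂(_root_.stdGaussian d)
      = ∫ g, ∏ s, φ ⟪cyclicShift w (f s), g⟫ ∂(ProbabilityTheory.stdGaussian _) := by
    intro f w
    simp only [hΦw]
    rw [← measurePreserving_toLp.map_eq, integral_map measurePreserving_toLp.aemeasurable
      (hprodm f w).aestronglyMeasurable]
  have hne : (Finset.univ : Finset (Fin (2 * m))).Nonempty := ⟨⟨0, by omega⟩, Finset.mem_univ _⟩
  have hΦint : ∀ f, Integrable (Φ f) ((_root_.stdGaussian d).prod μ) := by
    intro f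
    have hw : ∀ᵐ w ∂μ, Integrable (fun g => Φ f (g, w)) (_root_.stdGaussian d) ∧
        ∫ g, ‖Φ f (g, w)‖ ∂(_root_.stdGaussian d) ≤ 2 * m * M := by
      filter_upwards [hμ.ae_sum_sq] with w hw
      obtain ⟨h1, -⟩ := integrable_prod_and_abs_integral_le hφ hm hφb
        (fun s => cyclicShift w (f s)) (fun s => norm_cyclicShift hw _)
      obtain ⟨-, h2⟩ := integrable_prod_inner hφ (Finset.univ : Finset (Fin (2 * m))) hne 1
        (by simpa using hint) (fun s => cyclicShift w (f s)) (fun s => norm_cyclicShift hw _)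
      simp only [pow_one, Finset.card_fin, one_mul] at h2
      push_cast at h2
      refine ⟨?_, ?_⟩
      · simp only [hΦw]
        exact (measurePreserving_toLp.integrable_comp (hprodm f w).aestronglyMeasurable).2 h1
      · refine le_trans (le_of_eq ?_) h2
        rw [← measurePreserving_toLp.map_eq, integral_map measurePreserving_toLp.aemeasurable
          (Measurable.aestronglyMeasurable (by fun_prop))]
        simp only [hΦw, Real.norm_eq_abs, Finset.abs_prod]
    rw [integrable_prod_iff' (hΦm f).aestronglyMeasurable]
    refine ⟨hw.mono fun w h => h.1, Integrable.of_bound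
      (hΦm f).norm.stronglyMeasurable.integral_prod_left'.aestronglyMeasurable (2 * m * M)
      (hw.mono fun w h => ?_)⟩
    rw [Real.norm_eq_abs, abs_of_nonneg (integral_nonneg fun _ => norm_nonneg _)]
    exact h.2
  have hexp : ∀ p : (Fin d → ℝ) × (Fin d → ℝ),
      ((1 / d : ℝ) * ∑ i : Fin d, φ (∑ j, p.1 j * p.2 (j + i))) ^ (2 * m)
        = (1 / d : ℝ) ^ (2 * m) * ∑ f, Φ f p := by
    intro p
    rw [mul_pow]
    congr 1
    exact Fintype.sum_pow _ _
  simp only [hexp]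
  rw [integral_const_mul, integral_finsetSum _ fun f _ => hΦint f]
  have htriv : ∀ f, ∫ p, Φ f p ∂((_root_.stdGaussian d).prod μ) ≤ 2 * m * M := by
    intro f
    rw [integral_prod_symm _ (hΦint f)]
    simp only [hΦE]
    refine (le_abs_self _).trans ?_
    have h := norm_integral_le_of_norm_le_const (μ := μ) (C := 2 * m * M)
      (f := fun w => ∫ g, ∏ s, φ ⟪cyclicShift w (f s), g⟫ ∂(ProbabilityTheory.stdGaussian _))
      (by
        filter_upwards [hμ.ae_sum_sq] with w hw
        exact (integrable_prod_and_abs_integral_le hφ hm hφb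
          (fun s => cyclicShift w (f s)) (fun s => norm_cyclicShift hw _)).2)
    simpa using h
  have hoffint : ∀ f : Fin (2 * m) → Fin d, ∀ s ∈ Finset.univ, ∀ t ∈ Finset.univ, Integrable
      (fun w => if f s ≠ f t then ⟪cyclicShift w (f s), cyclicShift w (f t)⟫ ^ (2 * m) else 0)
      μ := by
    intro f s _ t _
    by_cases h : f s = f t
    · simp [h]
    simp only [ne_eq, h, not_false_eq_true, if_true, inner_cyclicShift]
    refine Integrable.of_bound (Measurable.aestronglyMeasurable (by fun_prop)) 1 ?_
    filter_upwards [hμ.ae_sum_sq] with w hw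
    rw [← inner_cyclicShift, norm_pow]
    refine pow_le_one₀ (norm_nonneg _) ((norm_inner_le_norm _ _).trans ?_)
    rw [norm_cyclicShift hw, norm_cyclicShift hw, one_mul]
  have hoff : ∀ f : Fin (2 * m) → Fin d, Integrable (fun w => offDiag m (cyclicShift w) f) μ ∧
      ∫ w, offDiag m (cyclicShift w) f ∂μ ≤ (2 * m) ^ 2 * A / d ^ m := by
    intro f
    unfold offDiag
    refine ⟨integrable_finsetSum _ fun s hs => integrable_finsetSum _ (hoffint f s hs), ?_⟩
    rw [integral_finsetSum _ fun s hs => integrable_finsetSum _ (hoffint f s hs)]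
    calc _ ≤ ∑ _s : Fin (2 * m), ∑ _t : Fin (2 * m), A / d ^ m := by
          refine Finset.sum_le_sum fun s hs => ?_
          rw [integral_finsetSum _ (hoffint f s hs)]
          refine Finset.sum_le_sum fun t _ => ?_
          by_cases h : f s = f t
          · simp only [h, ne_eq, not_true_eq_false, if_false, integral_zero]
            positivity
          · simp only [ne_eq, h, not_false_eq_true, if_true, inner_cyclicShift]
            exact hμ.integral_autocorrelation_pow_le hm (sub_ne_zero.2 (Ne.symm h))
      _ = _ := by
          simp only [Finset.sum_const, Finset.card_fin, nsmul_eq_mul]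
          push_cast
          ring
  have hiso : ∀ (f : Fin (2 * m) → Fin d) (s : Fin (2 * m)),
      (∀ t, t ≠ s → f t - f s ∉ ({0} : Finset (Fin d))) →
      ∫ p, Φ f p ∂((_root_.stdGaussian d).prod μ) ≤ Q * ((2 * m) ^ 2 * A / d ^ m) := by
    intro f s hs
    rw [integral_prod_symm _ (hΦint f)]
    simp only [hΦE]
    refine (le_abs_self _).trans ?_
    rw [← Real.norm_eq_abs]
    refine (norm_integral_le_of_norm_le ((hoff f).1.const_mul Q) ?_).trans ?_
    · filter_upwards [hμ.ae_sum_sq] with w hw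
      refine hQ d hd (cyclicShift w) (fun i => norm_cyclicShift hw i) f s fun t ht h => hs t ht ?_
      simp [h]
    · rw [integral_const_mul]
      exact mul_le_mul_of_nonneg_left (hoff f).2 hQ0
  have hsum := sum_tuples_le m ({0} : Finset (Fin d))
    (fun f => ∫ p, Φ f p ∂((_root_.stdGaussian d).prod μ)) (by positivity) (by positivity)
    htriv hiso
  simp only [Finset.card_singleton, Nat.cast_one, mul_one, Fintype.card_fin] at hsum
  calc _ ≤ (1 / d : ℝ) ^ (2 * m) * ((2 * m) ^ (2 * m) * d ^ m * (2 * m * M)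
        + d ^ (2 * m) * (Q * ((2 * m) ^ 2 * A / d ^ m))) := by gcongr
    _ = _ := by
      rw [two_mul m, pow_add (1 / (d : ℝ)), pow_add (d : ℝ), div_pow, one_pow]
      field_simp

end Assembly

/-- **High-degree part of a cyclically averaged activation is `O(d^{-1/2})` in `L^{2m}`,
Gaussian case.**  For `g ~ N(0,I_d)` and `w` uniform on the unit sphere, independent,
`E[ ((1/d) ∑_{i=0}^{d-1} φ_{>ℓ}(⟨g, Lⁱw⟩))^{2m} ]^{1/(2m)} ≤ C d^{-1/2}` for `d` large,
where `L` is the cyclic shift matrix, so `⟨g, Lⁱw⟩ = ∑_j g_j w_{j+i mod d}`. -/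
theorem cyclic_average_high_degree_gaussian (m ℓ : ℕ) (hm : 1 ≤ m) (hℓ : 4 * m ≤ ℓ)
    (σ : ℝ → ℝ) (hσmeas : Measurable σ) (c₀ c₁ : ℝ) (hc₀ : 0 < c₀) (hc₁0 : 0 < c₁)
    (hc₁ : c₁ < 1) (hσb : ∀ x : ℝ, |σ x| ≤ c₀ * Real.exp (c₁ * x ^ 2 / (8 * m))) :
    ∃ C : ℝ, 0 < C ∧ ∃ d₀ : ℕ, ∀ d : ℕ, d₀ ≤ d →
      ∀ μw : Measure (Fin d → ℝ), IsUniformOnSphere d 1 μw →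
        (∫ p : (Fin d → ℝ) × (Fin d → ℝ),
            ((1 / d : ℝ) * ∑ i : Fin d, phiGt σ ℓ (∑ j, p.1 j * p.2 (j + i))) ^ (2 * m)
          ∂((stdGaussian d).prod μw)) ^ ((1 : ℝ) / (2 * m))
        ≤ C * (d : ℝ) ^ (-(1 / 2) : ℝ) := by
  have hmR : (1 : ℝ) ≤ m := by exact_mod_cast hm
  have hb0 : (0 : ℝ) < 1 / (8 * m) := by positivity
  have hb1 : (1 : ℝ) / (8 * m) ≤ 1 / 8 := by gcongr; linarith
  have hσb' : ∀ x, |σ x| ≤ c₀ * Real.exp (1 / (8 * m) * x ^ 2) := by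
    intro x
    refine (hσb x).trans ?_
    gcongr
    rw [div_mul_eq_mul_div]
    gcongr
  have hφ := measurable_phiGt hσmeas ℓ
  obtain ⟨B, hB0, hB⟩ := exists_phiGt_le hc₀.le hb0 hσb' ℓ
  obtain ⟨C, hC0, hC⟩ := smoothing_bound hφ hB0 hb1 hB (2 * m) fun p hp =>
    integral_phiGt_mul_poly hσmeas hc₀.le hb0 (by linarith) hσb' ℓ p (by omega)
  obtain ⟨D, hD0, hD⟩ := integral_cyclic_average_pow_le hφ hm hB hC0 hC
  refine ⟨(D + 1) ^ ((1 : ℝ) / (2 * m)), by positivity, 1, fun d hd μ hμ => ?_⟩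
  have hdR : (0 : ℝ) < d := by exact_mod_cast hd
  calc _ ≤ ((D + 1) / d ^ m : ℝ) ^ ((1 : ℝ) / (2 * m)) := by
        refine Real.rpow_le_rpow (integral_nonneg fun p => (even_two_mul m).pow_nonneg _)
          ((hD d hd μ hμ).trans ?_) (by positivity)
        gcongr
        linarith
    _ = _ := by
        rw [Real.div_rpow (by positivity) (by positivity), ← Real.rpow_natCast (d : ℝ) m,
          ← Real.rpow_mul hdR.le, Real.rpow_neg hdR.le, div_eq_mul_inv]
        congr 3
        field_simp
end

section
/- For any integers ℓ ≥ 0 and d ≥ 1, any polynomial f : ℝ^d → ℝ of degree at most ℓ, and any real q ≥ 2: ( E_{g~N(0,I_d)}[ |f(g)|^q ] )^{2/q} ≤ (q−1)^ℓ · E_{g~N(0,I_d)}[ f(g)² ]. -/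
/-!
The inequality is transferred from random signs to the Gaussian by the central limit theorem.

*Two-point inequality* (`two_point`): `(|a + b|^q + |a - b|^q) / 2 ≤ (a² + (q - 1) b²)^(q/2)`
for `q ≥ 2`.

*Adding a random sign* (`Hyper.rad`). Let `μ` satisfy the inequality for polynomials of every
degree, and let `X ∼ μ` and `ε = ±1` be an independent fair sign. For a polynomial `f` of degree
at most `n`, write `f (x ± v) = g x ± h x`; then `deg g ≤ n`, `deg h ≤ n - 1`. The two-point
inequality in `ε`, Minkowski's inequality in `L^(q/2)` and the assumption on `μ` give
`‖f (X + ε v)‖_q² ≤ ‖g‖_q² + (q - 1) ‖h‖_q² ≤ (q - 1)^n (‖g‖₂² + ‖h‖₂²)`, and the last bracket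
is `‖f (X + ε v)‖₂²`. Starting from the Dirac mass at `0`, the inequality therefore holds for the
law of `∑ εᵢ vᵢ` for any list of vectors `vᵢ` (`law_hyper`).

*Passage to the limit.* With `n` copies of each `eᵢ / √n`, the laws converge weakly to the standard
Gaussian (`tendsto_law`, by characteristic functions and `cos (t / √n) ^ n → exp (-t² / 2)`).
The left-hand side is lower semicontinuous under weak convergence. For the right-hand side,
second moments must not escape to infinity, which follows from a uniform bound on fourth moments;
that bound is itself obtained from the case `q = 4` of the sign inequality (`bounded_sq`,
`Hyper.four`, `hyper_limit`).
-/

open MeasureTheory ProbabilityTheory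

/-! ### The two-point inequality -/

/-- Concavity of `s ↦ s ^ ((q - 2) / q)`, applied at `a ^ q` and `b ^ q`. -/
theorem mean_rpow_le (q a b : ℝ) (hq : 2 ≤ q) (ha : 0 ≤ a) (hb : 0 ≤ b) :
    (a ^ (q - 2) + b ^ (q - 2)) / 2 ≤ ((a ^ q + b ^ q) / 2) ^ ((q - 2) / q) := by
  have hq0 : 0 < q := by linarith
  obtain ⟨-, hc⟩ := Real.concaveOn_rpow (p := (q - 2) / q) (by apply div_nonneg <;> linarith)
    (by rw [div_le_one hq0]; linarith)
  have h := hc (Set.mem_Ici.2 (Real.rpow_nonneg ha q)) (Set.mem_Ici.2 (Real.rpow_nonneg hb q))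
    (show (0 : ℝ) ≤ 1 / 2 by norm_num) (show (0 : ℝ) ≤ 1 / 2 by norm_num) (by norm_num)
  have e : q * ((q - 2) / q) = q - 2 := by field_simp
  simp only [smul_eq_mul, ← Real.rpow_mul ha, ← Real.rpow_mul hb, e] at h
  calc _ = 1 / 2 * a ^ (q - 2) + 1 / 2 * b ^ (q - 2) := by ring
    _ ≤ _ := h
    _ = _ := by congr 1; ring

theorem hasDerivAt_one_add_rpow (r y : ℝ) (h : 0 < 1 + y) :
    HasDerivAt (fun s : ℝ => (1 + s) ^ r) (r * (1 + y) ^ (r - 1)) y := by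
  have := ((hasDerivAt_id y).const_add 1).rpow_const (p := r) (Or.inl h.ne')
  simpa using this

theorem hasDerivAt_one_sub_rpow (r y : ℝ) (h : 0 < 1 - y) :
    HasDerivAt (fun s : ℝ => (1 - s) ^ r) (-(r * (1 - y) ^ (r - 1))) y := by
  have := ((hasDerivAt_id y).const_sub 1).rpow_const (p := r) (Or.inl h.ne')
  simpa using this

/-- The even part `U y = ((1 + y) ^ q + (1 - y) ^ q) / 2` is nondecreasing on `[0, 1)`. -/
theorem even_part_mono (q s y : ℝ) (hq : 2 ≤ q) (hs : 0 ≤ s) (hsy : s ≤ y) (hy : y < 1) :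
    ((1 + s) ^ q + (1 - s) ^ q) / 2 ≤ ((1 + y) ^ q + (1 - y) ^ q) / 2 := by
  have hm : MonotoneOn (fun s : ℝ => ((1 + s) ^ q + (1 - s) ^ q) / 2) (Set.Ico 0 1) := by
    have hd : ∀ x ∈ Set.Ico (0 : ℝ) 1, HasDerivAt (fun s : ℝ => ((1 + s) ^ q + (1 - s) ^ q) / 2)
        ((q * (1 + x) ^ (q - 1) + -(q * (1 - x) ^ (q - 1))) / 2) x := fun x hx =>
      ((hasDerivAt_one_add_rpow q x (by linarith [hx.1])).add
        (hasDerivAt_one_sub_rpow q x (by linarith [hx.2]))).div_const 2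
    refine monotoneOn_of_deriv_nonneg (convex_Ico 0 1)
      (fun x hx => (hd x hx).continuousAt.continuousWithinAt)
      (fun x hx => (hd x (interior_subset hx)).differentiableAt.differentiableWithinAt) ?_
    intro x hx
    have hx' := interior_subset hx
    rw [(hd x hx').deriv]
    have : (1 - x) ^ (q - 1) ≤ (1 + x) ^ (q - 1) :=
      Real.rpow_le_rpow (by linarith [hx'.2]) (by linarith [hx'.1]) (by linarith)
    nlinarith
  exact hm ⟨hs, by linarith⟩ ⟨by linarith, hy⟩ hsy

/-- The differential inequality `U' y ≤ q (q - 1) y (U y) ^ ((q - 2) / q)` for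
`U y = ((1 + y) ^ q + (1 - y) ^ q) / 2`. By the mean value theorem `U' y = y U'' c` with
`0 < c < y`; then `U'' c = q (q - 1) ((1 + c) ^ (q - 2) + (1 - c) ^ (q - 2)) / 2` is bounded by
`mean_rpow_le` and monotonicity of `U`. -/
theorem deriv_even_part_le (q y : ℝ) (hq : 2 ≤ q) (hy0 : 0 < y) (hy : y < 1) :
    (q * (1 + y) ^ (q - 1) + -(q * (1 - y) ^ (q - 1))) / 2 ≤
      q * (q - 1) * y * (((1 + y) ^ q + (1 - y) ^ q) / 2) ^ ((q - 2) / q) := by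
  have hd : ∀ x ∈ Set.Icc (0 : ℝ) y,
      HasDerivAt (fun s : ℝ => (q * (1 + s) ^ (q - 1) + -(q * (1 - s) ^ (q - 1))) / 2)
        ((q * ((q - 1) * (1 + x) ^ (q - 1 - 1)) + -(q * -((q - 1) * (1 - x) ^ (q - 1 - 1)))) / 2) x :=
    fun x hx => ((((hasDerivAt_one_add_rpow (q - 1) x (by linarith [hx.1])).const_mul q).add
      (((hasDerivAt_one_sub_rpow (q - 1) x (by linarith [hx.2])).const_mul q).neg)).div_const 2)
  obtain ⟨c, hc, h⟩ := exists_hasDerivAt_eq_slope _ _ hy0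
    (fun x hx => (hd x hx).continuousAt.continuousWithinAt)
    (fun x hx => hd x (Set.Ioo_subset_Icc_self hx))
  have hc1 : 0 ≤ 1 - c := by linarith [hc.2]
  have hc2 : 0 ≤ 1 + c := by linarith [hc.1]
  have h1 := mean_rpow_le q (1 + c) (1 - c) hq hc2 hc1
  have h2 : (((1 + c) ^ q + (1 - c) ^ q) / 2) ^ ((q - 2) / q) ≤
      (((1 + y) ^ q + (1 - y) ^ q) / 2) ^ ((q - 2) / q) :=
    Real.rpow_le_rpow (by positivity) (even_part_mono q c y hq hc.1.le hc.2.le hy)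
      (div_nonneg (by linarith) (by linarith))
  rw [eq_div_iff (by linarith)] at h
  simp only [add_zero, sub_zero, Real.one_rpow] at h
  have e : q - 1 - 1 = q - 2 := by ring
  rw [e] at h
  have h3 := mul_le_mul_of_nonneg_left (h1.trans h2)
    (show 0 ≤ q * (q - 1) * y from mul_nonneg (mul_nonneg (by linarith) (by linarith)) hy0.le)
  linarith

/-- The case `a = 1`, `0 ≤ b ≤ 1` of the two-point inequality: by `deriv_even_part_le` the
difference of the two sides is nonincreasing in `y`, and it vanishes at `y = 0`. -/
theorem two_point_unit (q y : ℝ) (hq : 2 ≤ q) (hy0 : 0 ≤ y) (hy : y ≤ 1) :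
    (((1 + y) ^ q + (1 - y) ^ q) / 2) ^ (2 / q) ≤ 1 + (q - 1) * y ^ 2 := by
  have hq0 : 0 < q := by linarith
  have hpos : ∀ x ∈ Set.Icc (0 : ℝ) 1, 0 < ((1 + x) ^ q + (1 - x) ^ q) / 2 := fun x hx => by
    have : 0 < (1 + x) ^ q := Real.rpow_pos_of_pos (by linarith [hx.1]) q
    have : 0 ≤ (1 - x) ^ q := Real.rpow_nonneg (by linarith [hx.2]) q
    linarith
  have hanti : AntitoneOn (fun y : ℝ => (((1 + y) ^ q + (1 - y) ^ q) / 2) ^ (2 / q)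
      - (1 + (q - 1) * y ^ 2)) (Set.Icc 0 1) := by
    have hd : ∀ x ∈ Set.Ioo (0 : ℝ) 1, HasDerivAt
        (fun y : ℝ => (((1 + y) ^ q + (1 - y) ^ q) / 2) ^ (2 / q) - (1 + (q - 1) * y ^ 2))
        (((q * (1 + x) ^ (q - 1) + -(q * (1 - x) ^ (q - 1))) / 2) * (2 / q)
          * (((1 + x) ^ q + (1 - x) ^ q) / 2) ^ (2 / q - 1) - (q - 1) * (2 * x)) x := by
      intro x hx
      have h1 := ((hasDerivAt_one_add_rpow q x (by linarith [hx.1])).add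
        (hasDerivAt_one_sub_rpow q x (by linarith [hx.2]))).div_const 2
      have h2 := h1.rpow_const (p := 2 / q) (Or.inl (hpos x (Set.Ioo_subset_Icc_self hx)).ne')
      have h3 := (((hasDerivAt_id x).pow 2).const_mul (q - 1)).const_add 1
      have h4 := h2.sub h3
      convert! h4 using 1
      simp
    refine antitoneOn_of_deriv_nonpos (convex_Icc 0 1) ?_ ?_ ?_
    · refine ContinuousOn.sub (ContinuousOn.rpow_const ?_
        fun x hx => Or.inl (hpos x hx).ne') (by fun_prop)
      refine ContinuousOn.div_const (ContinuousOn.add ?_ ?_) 2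
      · exact ContinuousOn.rpow_const (by fun_prop) fun x _ => Or.inr hq0.le
      · exact ContinuousOn.rpow_const (by fun_prop) fun x _ => Or.inr hq0.le
    · rw [interior_Icc]
      exact fun x hx => (hd x hx).differentiableAt.differentiableWithinAt
    · rw [interior_Icc]
      intro x hx
      rw [(hd x hx).deriv]
      have hU := hpos x (Set.Ioo_subset_Icc_self hx)
      have h1 := deriv_even_part_le q x hq hx.1 hx.2
      set U := ((1 + x) ^ q + (1 - x) ^ q) / 2
      have h2 : U ^ ((q - 2) / q) * U ^ (2 / q - 1) = 1 := by
        rw [← Real.rpow_add hU]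
        have : (q - 2) / q + (2 / q - 1) = 0 := by field_simp; ring
        rw [this, Real.rpow_zero]
      have h3 := mul_le_mul_of_nonneg_right h1
        (show 0 ≤ (2 / q) * U ^ (2 / q - 1) by positivity)
      have h4 : q * (q - 1) * x * U ^ ((q - 2) / q) * ((2 / q) * U ^ (2 / q - 1))
          = (q - 1) * (2 * x) := by
        calc _ = (q * (2 / q)) * (q - 1) * x * (U ^ ((q - 2) / q) * U ^ (2 / q - 1)) := by ring
          _ = _ := by rw [h2]; field_simp
      linarith
  have := hanti (Set.left_mem_Icc.2 zero_le_one) ⟨hy0, hy⟩ hy0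
  simp at this
  linarith

/-- The two-point hypercontractive inequality. -/
theorem two_point (q a b : ℝ) (hq : 2 ≤ q) :
    (|a + b| ^ q + |a - b| ^ q) / 2 ≤ (a ^ 2 + (q - 1) * b ^ 2) ^ (q / 2) := by
  have hq0 : 0 < q := by linarith
  -- By homogeneity the case `0 ≤ b ≤ a` reduces to `a = 1`.
  have key : ∀ a b : ℝ, 0 ≤ b → b ≤ a →
      (|a + b| ^ q + |a - b| ^ q) / 2 ≤ (a ^ 2 + (q - 1) * b ^ 2) ^ (q / 2) := by
    intro a b hb hab
    rcases (hb.trans hab).eq_or_lt with h0 | ha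
    · have : b = 0 := by linarith
      subst this; subst h0
      simp [Real.zero_rpow hq0.ne', Real.zero_rpow (half_pos hq0).ne']
    · have h := two_point_unit q (b / a) hq (by positivity) (by rw [div_le_one ha]; exact hab)
      have h1 : 0 ≤ 1 - b / a := by rw [sub_nonneg, div_le_one ha]; exact hab
      have h2 : 0 ≤ 1 + b / a := by positivity
      rw [← Real.le_rpow_inv_iff_of_pos (by positivity) (by nlinarith [sq_nonneg (b/a)])
        (by positivity), inv_div] at h
      have e1 : a + b = a * (1 + b / a) := by field_simp
      have e2 : a - b = a * (1 - b / a) := by field_simp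
      have e3 : a ^ 2 + (q - 1) * b ^ 2 = a ^ 2 * (1 + (q - 1) * (b / a) ^ 2) := by field_simp
      have e4 : (a ^ 2) ^ (q / 2) = a ^ q := by
        rw [← Real.rpow_natCast, ← Real.rpow_mul ha.le]; congr 1; push_cast; ring
      rw [e1, e2, e3, Real.mul_rpow (by positivity) (by nlinarith [sq_nonneg (b/a)]), e4,
        abs_of_nonneg (by positivity), abs_of_nonneg (by positivity),
        Real.mul_rpow ha.le h2, Real.mul_rpow ha.le h1]
      have := mul_le_mul_of_nonneg_left h (Real.rpow_nonneg ha.le q)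
      linarith
  have hpos : ∀ a b : ℝ, 0 ≤ a → 0 ≤ b →
      (|a + b| ^ q + |a - b| ^ q) / 2 ≤ (a ^ 2 + (q - 1) * b ^ 2) ^ (q / 2) := by
    intro a b ha hb
    rcases le_total b a with h | h
    · exact key a b hb h
    -- When `a < b`, swapping `a` and `b` only decreases the right-hand side, since `q - 1 ≥ 1`.
    · have := key b a ha h
      rw [add_comm b a, abs_sub_comm b a] at this
      refine this.trans (Real.rpow_le_rpow (by nlinarith [sq_nonneg a, sq_nonneg b]) ?_
        (by positivity))
      have : a ^ 2 ≤ b ^ 2 := by gcongr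
      nlinarith
  have h := hpos |a| |b| (abs_nonneg a) (abs_nonneg b)
  rw [sq_abs, sq_abs] at h
  refine le_trans (le_of_eq ?_) h
  rcases abs_cases a with ⟨ha, _⟩ | ⟨ha, _⟩ <;> rcases abs_cases b with ⟨hb, _⟩ | ⟨hb, _⟩ <;>
    rw [ha, hb]
  · rw [sub_neg_eq_add, ← sub_eq_add_neg, add_comm]
  · rw [← abs_neg (a + b), ← abs_neg (a - b), add_comm]; congr! 4 <;> ring_nf
  · rw [← abs_neg (a + b), ← abs_neg (a - b)]; congr! 4 <;> ring_nf

/-! ### Random signs -/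

section
variable {E : Type*} [NormedAddCommGroup E] [MeasurableSpace E] [BorelSpace E]

/-- Every continuous real function is `μ`-integrable, as for a finitely supported measure. This
disposes of all integrability conditions for the laws of sums of signs. -/
def AllInt (μ : Measure E) : Prop := ∀ f : E → ℝ, Continuous f → Integrable f μ

/-- The law of `X + ε v`, where `X` has law `μ` and `ε = ±1` is an independent fair sign. -/
noncomputable def rad (v : E) (μ : Measure E) : Measure E :=
  (2⁻¹ : ENNReal) • (μ.map (fun x => x + v) + μ.map (fun x => x - v))

instance rad_prob (v : E) (μ : Measure E) [IsProbabilityMeasure μ] :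
    IsProbabilityMeasure (rad v μ) := by
  constructor
  simp only [rad, Measure.smul_apply, Measure.add_apply]
  rw [Measure.map_apply (by fun_prop) .univ, Measure.map_apply (by fun_prop) .univ]
  simp [one_add_one_eq_two, ENNReal.inv_mul_cancel]

theorem AllInt.rad {μ : Measure E} (h : AllInt μ) (v : E) : AllInt (rad v μ) := by
  intro f hf
  refine Integrable.smul_measure (Integrable.add_measure ?_ ?_) (by simp)
  · exact (integrable_map_measure hf.aestronglyMeasurable (by fun_prop)).2
      (h _ (hf.comp (by fun_prop)))
  · exact (integrable_map_measure hf.aestronglyMeasurable (by fun_prop)).2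
      (h _ (hf.comp (by fun_prop)))

theorem integral_rad {F : Type*} [NormedAddCommGroup F] [NormedSpace ℝ F]
    [SecondCountableTopology F] {μ : Measure E} (v : E) {f : E → F} (hf : Continuous f)
    (h1 : Integrable (fun x => f (x + v)) μ) (h2 : Integrable (fun x => f (x - v)) μ) :
    ∫ x, f x ∂(rad v μ) = (2⁻¹ : ℝ) • (∫ x, f (x + v) ∂μ + ∫ x, f (x - v) ∂μ) := by
  rw [rad, integral_smul_measure, integral_add_measure
    ((integrable_map_measure hf.aestronglyMeasurable (by fun_prop)).2 h1)
    ((integrable_map_measure hf.aestronglyMeasurable (by fun_prop)).2 h2),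
    integral_map (by fun_prop) hf.aestronglyMeasurable,
    integral_map (by fun_prop) hf.aestronglyMeasurable]
  simp

theorem AllInt.integral_rad {μ : Measure E} (h : AllInt μ) (v : E) {f : E → ℝ}
    (hf : Continuous f) :
    ∫ x, f x ∂(_root_.rad v μ) = ∫ x, (f (x + v) + f (x - v)) / 2 ∂μ := by
  have h1 := h (fun x => f (x + v)) (hf.comp (by fun_prop))
  have h2 := h (fun x => f (x - v)) (hf.comp (by fun_prop))
  rw [_root_.integral_rad v hf h1 h2, integral_div, integral_add h1 h2, smul_eq_mul]
  ring

/-- Minkowski's inequality in `L^r`, written with Bochner integrals. -/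
theorem AllInt.minkowski {μ : Measure E} (h : AllInt μ) {r : ℝ} (hr : 1 ≤ r) {G H : E → ℝ}
    (hG : Continuous G) (hH : Continuous H) (hG0 : ∀ x, 0 ≤ G x) (hH0 : ∀ x, 0 ≤ H x) :
    (∫ x, (G x + H x) ^ r ∂μ) ^ r⁻¹ ≤ (∫ x, G x ^ r ∂μ) ^ r⁻¹ + (∫ x, H x ^ r ∂μ) ^ r⁻¹ := by
  have hr0 : 0 < r := by linarith
  have hr1 : ENNReal.ofReal r ≠ 0 := by simpa using hr0
  have key : ∀ f : E → ℝ, Continuous f → (∀ x, 0 ≤ f x) →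
      eLpNorm f (ENNReal.ofReal r) μ = ENNReal.ofReal ((∫ x, f x ^ r ∂μ) ^ r⁻¹) := by
    intro f hf hf0
    have hm : MemLp f (ENNReal.ofReal r) μ := by
      rw [← integrable_norm_rpow_iff hf.aestronglyMeasurable hr1 ENNReal.ofReal_ne_top,
        ENNReal.toReal_ofReal hr0.le]
      exact h _ (hf.norm.rpow_const fun x => Or.inr hr0.le)
    rw [hm.eLpNorm_eq_integral_rpow_norm hr1 ENNReal.ofReal_ne_top, ENNReal.toReal_ofReal hr0.le]
    simp only [Real.norm_of_nonneg (hf0 _)]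
  have hnn : ∀ f : E → ℝ, (∀ x, 0 ≤ f x) → 0 ≤ (∫ x, f x ^ r ∂μ) ^ r⁻¹ := fun f hf =>
    Real.rpow_nonneg (integral_nonneg fun x => Real.rpow_nonneg (hf x) r) _
  have := eLpNorm_add_le (μ := μ) (p := ENNReal.ofReal r) hG.aestronglyMeasurable
    hH.aestronglyMeasurable (by simpa using hr)
  rw [key G hG hG0, key H hH hH0, key (G + H) (hG.add hH) fun x => add_nonneg (hG0 x) (hH0 x),
    ← ENNReal.ofReal_add (hnn G hG0) (hnn H hH0),
    ENNReal.ofReal_le_ofReal_iff (add_nonneg (hnn G hG0) (hnn H hH0))] at this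
  exact this

/-- The law of `∑ εᵢ vᵢ` for independent fair signs `εᵢ`, the `vᵢ` being the entries of the list. -/
noncomputable def law : List E → Measure E
  | [] => Measure.dirac 0
  | v :: l => rad v (law l)

instance law_prob (l : List E) : IsProbabilityMeasure (law l) := by
  induction l with
  | nil => exact inferInstanceAs (IsProbabilityMeasure (Measure.dirac 0))
  | cons v l ih => exact rad_prob v (law l)

theorem law_allInt (l : List E) : AllInt (law l) := by
  induction l with
  | nil => exact fun f hf => integrable_dirac (by simp)
  | cons v l ih => exact ih.rad v

end

/-! ### Polynomial functions -/

section
variable {E : Type*} [NormedAddCommGroup E] [InnerProductSpace ℝ E]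

/-- `PolyDegLE n f`: the function `f` is a polynomial of degree at most `n`, that is, it is built
from constants and continuous linear functionals, the number of linear factors in a product being
at most `n`. This coordinate-free form is convenient for translations. -/
inductive PolyDegLE : ℕ → (E → ℝ) → Prop
  | const (c : ℝ) : PolyDegLE 0 fun _ => c
  | add {n : ℕ} {f g : E → ℝ} : PolyDegLE n f → PolyDegLE n g → PolyDegLE n fun x => f x + g x
  | mul {n : ℕ} {f : E → ℝ} (L : E →L[ℝ] ℝ) : PolyDegLE n f → PolyDegLE (n + 1) fun x => L x * f x
  | succ {n : ℕ} {f : E → ℝ} : PolyDegLE n f → PolyDegLE (n + 1) f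

namespace PolyDegLE

theorem continuous {n : ℕ} {f : E → ℝ} (hf : PolyDegLE n f) : Continuous f := by
  induction hf with
  | const c => exact continuous_const
  | add _ _ h1 h2 => exact h1.add h2
  | mul L _ h => exact L.continuous.mul h
  | succ _ h => exact h

theorem const' (n : ℕ) (c : ℝ) : PolyDegLE n fun _ : E => c := by
  induction n with
  | zero => exact .const c
  | succ n ih => exact ih.succ

theorem mono {m n : ℕ} (h : m ≤ n) {f : E → ℝ} (hf : PolyDegLE m f) : PolyDegLE n f := by
  induction h with
  | refl => exact hf
  | step _ ih => exact ih.succ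

theorem const_mul {n : ℕ} {f : E → ℝ} (c : ℝ) (hf : PolyDegLE n f) : PolyDegLE n fun x => c * f x := by
  induction hf with
  | const c' => exact .const _
  | add _ _ h1 h2 => simpa only [mul_add] using h1.add h2
  | mul L _ h => simpa only [mul_left_comm] using h.mul L
  | succ _ h => exact h.succ

theorem sub {n : ℕ} {f g : E → ℝ} (hf : PolyDegLE n f) (hg : PolyDegLE n g) :
    PolyDegLE n fun x => f x - g x := by
  simpa [sub_eq_add_neg] using hf.add (hg.const_mul (-1))

theorem shift {n : ℕ} {f : E → ℝ} (v : E) (hf : PolyDegLE n f) : PolyDegLE n fun x => f (x + v) := by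
  induction hf with
  | const c' => exact .const _
  | add _ _ h1 h2 => exact h1.add h2
  | mul L _ h => simpa only [map_add, add_mul] using (h.mul L).add (h.const_mul (L v)).succ
  | succ _ h => exact h.succ

/-- A symmetric difference lowers the degree by one; in degree `0` it vanishes, which is stated
separately because `n - 1` is not available there. -/
theorem diff {n : ℕ} {f : E → ℝ} (v : E) (hf : PolyDegLE n f) :
    (n = 0 → ∀ x, f (x + v) - f (x - v) = 0) ∧
      ∀ k, n = k + 1 → PolyDegLE k fun x => f (x + v) - f (x - v) := by
  induction hf with
  | const c' => simp
  | add _ _ h1 h2 =>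
    refine ⟨fun hn x => ?_, fun k hk => ?_⟩
    · have := h1.1 hn x
      have := h2.1 hn x
      linarith
    · convert! (h1.2 k hk).add (h2.2 k hk) using 2
      ring
  | @mul n f L hf h =>
    refine ⟨by simp, fun k hk => ?_⟩
    obtain rfl : n = k := by omega
    have h1 : PolyDegLE n fun x => L x * (f (x + v) - f (x - v)) := by
      cases n with
      | zero => simpa only [h.1 rfl, mul_zero] using const' _ _
      | succ m => exact (h.2 m rfl).mul L
    have h2 := h1.add (((hf.shift v).add (hf.shift (-v))).const_mul (L v))
    convert! h2 using 2
    simp only [map_add, map_sub, ← sub_eq_add_neg]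
    ring
  | @succ n f hf h =>
    refine ⟨by simp, fun k hk => ?_⟩
    obtain rfl : n = k := by omega
    simpa only [sub_eq_add_neg] using (hf.shift v).sub (hf.shift (-v))

end PolyDegLE

/-! ### Hypercontractivity for sums of random signs -/

variable [MeasurableSpace E] [BorelSpace E]

/-- Hypercontractivity from `L²` to `L^q`: `‖f‖_q² ≤ (q - 1)^n ‖f‖₂²` for every polynomial `f` of
degree at most `n`, for every `n`. -/
def Hyper (q : ℝ) (μ : Measure E) : Prop :=
  ∀ (n : ℕ) (f : E → ℝ), PolyDegLE n f →
    (∫ x, |f x| ^ q ∂μ) ^ (2 / q) ≤ (q - 1) ^ n * ∫ x, f x ^ 2 ∂μ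

/-- The induction step: hypercontractivity is preserved by adding an independent `± v`. The odd
part `h` has degree at most `n - 1`, which pays for the factor `q - 1` coming from the two-point
inequality. -/
theorem Hyper.rad {q : ℝ} (hq : 2 ≤ q) {μ : Measure E} (hμ : AllInt μ) (H : Hyper q μ) (v : E) :
    Hyper q (rad v μ) := by
  intro n f hf
  have hq0 : 0 < q := by linarith
  have hK : 0 ≤ q - 1 := by linarith
  set g : E → ℝ := fun x => 2⁻¹ * (f (x + v) + f (x - v)) with hg
  set h : E → ℝ := fun x => 2⁻¹ * (f (x + v) - f (x - v)) with hh
  have hgP : PolyDegLE n g := by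
    simpa only [hg, sub_eq_add_neg] using ((hf.shift v).add (hf.shift (-v))).const_mul 2⁻¹
  have hfc := hf.continuous
  have hgc := hgP.continuous
  have hhc : Continuous h := by fun_prop
  have hh_bound : (q - 1) * (∫ x, |h x| ^ q ∂μ) ^ (2 / q) ≤ (q - 1) ^ n * ∫ x, h x ^ 2 ∂μ := by
    cases n with
    | zero =>
      have h0 : ∀ x, h x = 0 := fun x => by simp [hh, (hf.diff v).1 rfl x]
      simp [h0, Real.zero_rpow hq0.ne', Real.zero_rpow (div_pos two_pos hq0).ne']
    | succ m =>
      have := mul_le_mul_of_nonneg_left (H m h (((hf.diff v).2 m rfl).const_mul 2⁻¹)) hK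
      rwa [← mul_assoc, ← pow_succ'] at this
  have hsq : ∀ (a : ℝ), (a ^ 2) ^ (q / 2) = |a| ^ q := fun a => by
    rw [← sq_abs, ← Real.rpow_natCast, ← Real.rpow_mul (abs_nonneg a)]
    congr 1; push_cast; ring
  have hint : ∀ k : E → ℝ, Continuous k → Integrable (fun x => |k x| ^ q) μ := fun k hk =>
    hμ _ (hk.abs.rpow_const fun x => Or.inr hq0.le)
  have e2q : (q / 2)⁻¹ = 2 / q := inv_div _ _
  have hnn : ∀ k : E → ℝ, 0 ≤ ∫ x, |k x| ^ q ∂μ := fun k =>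
    integral_nonneg fun x => Real.rpow_nonneg (abs_nonneg _) _
  calc (∫ x, |f x| ^ q ∂(_root_.rad v μ)) ^ (2 / q)
      = (∫ x, (|g x + h x| ^ q + |g x - h x| ^ q) / 2 ∂μ) ^ (2 / q) := by
        rw [hμ.integral_rad v (hfc.abs.rpow_const fun x => Or.inr hq0.le)]
        congr! 9 <;> simp only [hg, hh] <;> ring
    _ ≤ (∫ x, (g x ^ 2 + (q - 1) * h x ^ 2) ^ (q / 2) ∂μ) ^ (q / 2)⁻¹ := by
        rw [e2q]
        refine Real.rpow_le_rpow (integral_nonneg fun x => by positivity) ?_ (by positivity)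
        refine integral_mono (((hint _ (hgc.add hhc)).add (hint _ (hgc.sub hhc))).div_const 2)
          (hμ _ ?_) fun x => two_point q _ _ hq
        exact ((hgc.pow 2).add ((hhc.pow 2).const_mul _)).rpow_const
          fun x => Or.inr (half_pos hq0).le
    _ ≤ (∫ x, (g x ^ 2) ^ (q / 2) ∂μ) ^ (q / 2)⁻¹
        + (∫ x, ((q - 1) * h x ^ 2) ^ (q / 2) ∂μ) ^ (q / 2)⁻¹ :=
        hμ.minkowski (by linarith) (hgc.pow 2) ((hhc.pow 2).const_mul _)
          (fun x => sq_nonneg _) fun x => mul_nonneg hK (sq_nonneg _)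
    _ = (∫ x, |g x| ^ q ∂μ) ^ (2 / q) + (q - 1) * (∫ x, |h x| ^ q ∂μ) ^ (2 / q) := by
        simp only [Real.mul_rpow hK (sq_nonneg _), hsq]
        rw [integral_const_mul, Real.mul_rpow (Real.rpow_nonneg hK _) (hnn h),
          ← Real.rpow_mul hK, mul_inv_cancel₀ (half_pos hq0).ne', Real.rpow_one, e2q]
    _ ≤ (q - 1) ^ n * ∫ x, g x ^ 2 ∂μ + (q - 1) ^ n * ∫ x, h x ^ 2 ∂μ :=
        add_le_add (H n g hgP) hh_bound
    _ = (q - 1) ^ n * ∫ x, f x ^ 2 ∂(_root_.rad v μ) := by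
        rw [hμ.integral_rad v (f := fun x => f x ^ 2) (by fun_prop), ← mul_add,
          ← integral_add (hμ (fun x => g x ^ 2) (by fun_prop))
            (hμ (fun x => h x ^ 2) (by fun_prop))]
        congr 2 with x
        simp only [hg, hh]; ring

theorem law_hyper {q : ℝ} (hq : 2 ≤ q) (l : List E) : Hyper q (law l) := by
  induction l with
  | nil =>
    intro n f hf
    have hq0 : q ≠ 0 := by linarith
    simp only [law, integral_dirac]
    rw [← Real.rpow_mul (abs_nonneg _), mul_div_cancel₀ _ hq0, Real.rpow_two, sq_abs]
    exact le_mul_of_one_le_left (sq_nonneg _) (one_le_pow₀ (by linarith))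
  | cons v l ih => exact ih.rad hq (law_allInt l) v

theorem law_sq (l : List E) (L : E →L[ℝ] ℝ) :
    ∫ x, L x ^ 2 ∂(law l) = (l.map fun v => L v ^ 2).sum := by
  induction l with
  | nil => simp [law]
  | cons v l ih =>
    rw [law, (law_allInt l).integral_rad v (by fun_prop), List.map_cons, List.sum_cons, ← ih]
    have : ∀ x, (L (x + v) ^ 2 + L (x - v) ^ 2) / 2 = L v ^ 2 + L x ^ 2 := fun x => by
      simp only [map_add, map_sub]; ring
    simp only [this]
    rw [integral_add (integrable_const _) (law_allInt l _ (by fun_prop))]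
    simp

theorem law_charFun (l : List E) (t : E) :
    charFun (law l) t = ((l.map fun v => Real.cos (inner ℝ v t)).prod : ℝ) := by
  induction l with
  | nil => simp [law, charFun_dirac]
  | cons v l ih =>
    have hint : ∀ w : E, Integrable (fun x => Complex.exp (inner ℝ (x + w) t * Complex.I)) (law l) := by
      intro w
      refine Integrable.of_bound (C := 1) (Continuous.aestronglyMeasurable (by fun_prop)) ?_
      filter_upwards with x
      rw [Complex.norm_exp_ofReal_mul_I]
    have hsplit : ∀ w : E, ∫ x, Complex.exp (inner ℝ (x + w) t * Complex.I) ∂(law l)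
        = Complex.exp (inner ℝ w t * Complex.I) * charFun (law l) t := by
      intro w
      rw [charFun_apply, ← integral_const_mul]
      congr with x
      rw [← Complex.exp_add, inner_add_left]
      push_cast; ring_nf
    rw [charFun_apply, law, integral_rad v (by fun_prop) (hint v)
      (by simpa only [sub_eq_add_neg] using hint (-v))]
    simp only [sub_eq_add_neg]
    rw [hsplit, hsplit, ih, List.map_cons, List.prod_cons]
    push_cast
    rw [Complex.cos]
    simp only [inner_neg_left, Complex.real_smul]
    push_cast
    ring
end

/-! ### Passage to the weak limit -/

section
open Filter Topology
variable {E : Type*} [NormedAddCommGroup E] [MeasurableSpace E] [BorelSpace E]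

theorem tendsto_trunc {μ : ℕ → ProbabilityMeasure E} {γ : ProbabilityMeasure E}
    (h : Tendsto μ atTop (𝓝 γ)) {F : E → ℝ} (hF : Continuous F) (hF0 : ∀ x, 0 ≤ F x) {M : ℝ}
    (hM : 0 ≤ M) :
    Tendsto (fun n => ∫ x, min (F x) M ∂(μ n : Measure E)) atTop
      (𝓝 (∫ x, min (F x) M ∂(γ : Measure E))) :=
  ProbabilityMeasure.tendsto_iff_forall_integral_tendsto.1 h
    (BoundedContinuousFunction.ofNormedAddCommGroup (fun x => min (F x) M) (by fun_prop) M
      fun x => by rw [Real.norm_of_nonneg (le_min (hF0 x) hM)]; exact min_le_right _ _)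

theorem tendsto_integral_trunc {γ : Measure E} {F : E → ℝ} (hF : Continuous F)
    (hF0 : ∀ x, 0 ≤ F x) (hi : Integrable F γ) :
    Tendsto (fun m : ℕ => ∫ x, min (F x) m ∂γ) atTop (𝓝 (∫ x, F x ∂γ)) := by
  refine tendsto_integral_of_dominated_convergence F
    (fun m => (hF.min continuous_const).aestronglyMeasurable) hi (fun m => ?_) ?_
  · filter_upwards with x
    rw [Real.norm_of_nonneg (le_min (hF0 x) m.cast_nonneg)]
    exact min_le_left _ _
  · filter_upwards with x
    refine tendsto_const_nhds.congr' ?_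
    filter_upwards [eventually_ge_atTop ⌈F x⌉₊] with m hm
    exact (min_eq_left (Nat.ceil_le.1 hm)).symm

/-- An inequality `‖f‖_q² ≤ K ‖f‖₂²` passes to a weak limit when the fourth moments of `f` are
uniformly bounded: truncate `|f|^q` at `M` and `f²` at `N`, let `n → ∞`, then `N → ∞`, then
`M → ∞`. -/
theorem hyper_limit {μ : ℕ → ProbabilityMeasure E} {γ : ProbabilityMeasure E}
    (h : Tendsto μ atTop (𝓝 γ)) (hμ : ∀ n, AllInt (μ n : Measure E)) {f : E → ℝ}
    (hf : Continuous f) {q K C : ℝ} (hq : 0 < q) (hK : 0 ≤ K)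
    (hC : ∀ n, ∫ x, f x ^ 4 ∂(μ n : Measure E) ≤ C)
    (hi2 : Integrable (fun x => f x ^ 2) (γ : Measure E))
    (hiq : Integrable (fun x => |f x| ^ q) (γ : Measure E))
    (hb : ∀ n, (∫ x, |f x| ^ q ∂(μ n : Measure E)) ^ (2 / q)
      ≤ K * ∫ x, f x ^ 2 ∂(μ n : Measure E)) :
    (∫ x, |f x| ^ q ∂(γ : Measure E)) ^ (2 / q) ≤ K * ∫ x, f x ^ 2 ∂(γ : Measure E) := by
  have hqc : Continuous fun x => |f x| ^ q := hf.abs.rpow_const fun x => Or.inr hq.le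
  have hq0 : ∀ x, 0 ≤ |f x| ^ q := fun x => Real.rpow_nonneg (abs_nonneg _) _
  have h2q : 0 ≤ 2 / q := by positivity
  have step : ∀ (M : ℝ) (N : ℝ), 0 ≤ M → 0 < N →
      (∫ x, min (|f x| ^ q) M ∂(γ : Measure E)) ^ (2 / q)
        ≤ K * (∫ x, f x ^ 2 ∂(γ : Measure E) + C / N) := by
    intro M N hM hN
    have hlim := (((tendsto_trunc h (hf.pow 2) (fun x => sq_nonneg (f x)) hN.le).add_const
      (C / N)).const_mul K)
    refine (le_of_tendsto_of_tendsto' ((tendsto_trunc h hqc hq0 hM).rpow_const (Or.inr h2q))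
      hlim fun n => ?_).trans ?_
    · refine le_trans (Real.rpow_le_rpow (integral_nonneg fun x => le_min (hq0 x) hM)
        (integral_mono (hμ n _ (by fun_prop)) (hμ n _ hqc) fun x => min_le_left _ _) h2q)
        ((hb n).trans (mul_le_mul_of_nonneg_left ?_ hK))
      -- The mass lost by truncation is controlled by `f² ≤ min (f², N) + f⁴ / N`.
      calc ∫ x, f x ^ 2 ∂(μ n : Measure E)
          ≤ ∫ x, (min (f x ^ 2) N + f x ^ 4 / N) ∂(μ n : Measure E) := by
            refine integral_mono (hμ n _ (by fun_prop)) (hμ n _ (by fun_prop)) fun x => ?_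
            show f x ^ 2 ≤ min (f x ^ 2) N + f x ^ 4 / N
            rcases le_total (f x ^ 2) N with h | h
            · rw [min_eq_left h]
              have : 0 ≤ f x ^ 4 / N := by positivity
              linarith
            · rw [min_eq_right h]
              have : f x ^ 2 ≤ f x ^ 4 / N := by
                rw [le_div_iff₀ hN]
                nlinarith [sq_nonneg (f x)]
              linarith
        _ = ∫ x, min (f x ^ 2) N ∂(μ n : Measure E) + (∫ x, f x ^ 4 ∂(μ n : Measure E)) / N := by
            rw [integral_add (hμ n _ (by fun_prop)) (hμ n _ (by fun_prop)), integral_div]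
        _ ≤ ∫ x, min (f x ^ 2) N ∂(μ n : Measure E) + C / N := by
            gcongr
            exact hC n
    · refine mul_le_mul_of_nonneg_left (add_le_add_left ?_ _) hK
      refine integral_mono_of_nonneg ?_ hi2 ?_
      · filter_upwards with x using le_min (sq_nonneg _) hN.le
      · filter_upwards with x using min_le_left _ _
  refine le_of_tendsto' ((tendsto_integral_trunc hqc hq0 hiq).rpow_const (Or.inr h2q)) fun m => ?_
  have hlim : Tendsto (fun N : ℕ => K * (∫ x, f x ^ 2 ∂(γ : Measure E) + C / (N : ℝ))) atTop
      (𝓝 (K * (∫ x, f x ^ 2 ∂(γ : Measure E) + 0))) :=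
    ((tendsto_const_div_atTop_nhds_zero_nat C).const_add _).const_mul _
  rw [add_zero] at hlim
  refine ge_of_tendsto hlim ?_
  filter_upwards [eventually_gt_atTop 0] with N hN
  exact step m N m.cast_nonneg (by exact_mod_cast hN)

end

section
open Filter Topology
variable {E : Type*} [NormedAddCommGroup E] [InnerProductSpace ℝ E] [MeasurableSpace E]

/-- The case `q = 4`, without real powers. -/
theorem Hyper.four {μ : Measure E} (H : Hyper 4 μ) {k : ℕ} {f : E → ℝ} (hf : PolyDegLE k f) :
    ∫ x, f x ^ 4 ∂μ ≤ (3 ^ k * ∫ x, f x ^ 2 ∂μ) ^ 2 := by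
  have h := H k f hf
  have e : ∀ x, |f x| ^ (4 : ℝ) = f x ^ 4 := fun x => by
    rw [show (4 : ℝ) = (4 : ℕ) by norm_num, Real.rpow_natCast]
    exact (show Even 4 by decide).pow_abs _
  have h0 : 0 ≤ ∫ x, f x ^ 4 ∂μ := integral_nonneg fun x => by positivity
  simp only [e] at h
  rw [show (2 : ℝ) / 4 = 1 / 2 by norm_num, ← Real.sqrt_eq_rpow,
    show (4 : ℝ) - 1 = 3 by norm_num] at h
  rw [← Real.sq_sqrt h0]
  gcongr

/-- Under hypercontractivity with `q = 4`, uniformly bounded second moments of linear functionals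
give uniformly bounded second moments of all polynomials: for a product use
`(L f)² ≤ L⁴ + f⁴` and bound fourth moments by squares of second moments. -/
theorem bounded_sq {ι : Type*} {μ : ι → Measure E} [∀ n, IsProbabilityMeasure (μ n)]
    (hμ : ∀ n, AllInt (μ n)) (H : ∀ n, Hyper 4 (μ n))
    (hL : ∀ L : E →L[ℝ] ℝ, ∃ C, ∀ n, ∫ x, L x ^ 2 ∂(μ n) ≤ C)
    {k : ℕ} {f : E → ℝ} (hf : PolyDegLE k f) : ∃ C, ∀ n, ∫ x, f x ^ 2 ∂(μ n) ≤ C := by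
  induction hf with
  | const c => exact ⟨c ^ 2, fun n => by simp⟩
  | succ _ h => exact h
  | @add k f g hf hg h1 h2 =>
    obtain ⟨C1, h1⟩ := h1
    obtain ⟨C2, h2⟩ := h2
    have hfc := hf.continuous
    have hgc := hg.continuous
    refine ⟨2 * C1 + 2 * C2, fun n => ?_⟩
    calc ∫ x, (f x + g x) ^ 2 ∂(μ n) ≤ ∫ x, (2 * f x ^ 2 + 2 * g x ^ 2) ∂(μ n) :=
          integral_mono (hμ n _ (by fun_prop)) (hμ n _ (by fun_prop))
            fun x => by nlinarith [sq_nonneg (f x - g x)]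
      _ = 2 * ∫ x, f x ^ 2 ∂(μ n) + 2 * ∫ x, g x ^ 2 ∂(μ n) := by
          rw [integral_add (hμ n _ (by fun_prop)) (hμ n _ (by fun_prop)), integral_const_mul,
            integral_const_mul]
      _ ≤ _ := by gcongr <;> apply_assumption
  | @mul k f L hf h =>
    obtain ⟨C1, h1⟩ := h
    obtain ⟨C2, h2⟩ := hL L
    have hfc := hf.continuous
    have hLP : PolyDegLE 1 fun x => L x * 1 := (PolyDegLE.const 1).mul L
    simp only [mul_one] at hLP
    refine ⟨(3 ^ k * C1) ^ 2 + (3 ^ 1 * C2) ^ 2, fun n => ?_⟩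
    have nn : ∀ g : E → ℝ, 0 ≤ ∫ x, g x ^ 2 ∂(μ n) := fun g =>
      integral_nonneg fun x => sq_nonneg _
    calc ∫ x, (L x * f x) ^ 2 ∂(μ n) ≤ ∫ x, (f x ^ 4 + L x ^ 4) ∂(μ n) :=
          integral_mono (hμ n _ (by fun_prop)) (hμ n _ (by fun_prop))
            fun x => by
              nlinarith [sq_nonneg (f x ^ 2 - L x ^ 2), sq_nonneg (f x ^ 2), sq_nonneg (L x ^ 2)]
      _ = ∫ x, f x ^ 4 ∂(μ n) + ∫ x, L x ^ 4 ∂(μ n) :=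
          integral_add (hμ n _ (by fun_prop)) (hμ n _ (by fun_prop))
      _ ≤ (3 ^ k * ∫ x, f x ^ 2 ∂(μ n)) ^ 2 + (3 ^ 1 * ∫ x, L x ^ 2 ∂(μ n)) ^ 2 :=
          add_le_add ((H n).four hf) ((H n).four hLP)
      _ ≤ _ := by
          have := nn f
          have := nn L
          gcongr <;> apply_assumption

variable [BorelSpace E] in
/-- Polynomials lie in every `L^p` of a Gaussian measure, since continuous linear functionals do
(Fernique) and Hölder's inequality handles products. -/
theorem PolyDegLE.memLp {γ : Measure E} [IsGaussian γ] {k : ℕ} {f : E → ℝ} (hf : PolyDegLE k f) :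
    ∀ p : ENNReal, p ≠ ⊤ → MemLp f p γ := by
  induction hf with
  | const c => exact fun p _ => memLp_const c
  | succ _ h => exact h
  | add _ _ h1 h2 => exact fun p hp => (h1 p hp).add (h2 p hp)
  | mul L _ h =>
    intro p hp
    have hp2 : p * 2 ≠ ⊤ := ENNReal.mul_ne_top hp (by simp)
    have : ENNReal.HolderTriple (p * 2) (p * 2) p := ⟨by
      rw [ENNReal.mul_inv (by simp) (by simp), ← mul_add, ENNReal.inv_two_add_inv_two, mul_one]⟩
    exact (h _ hp2).mul (IsGaussian.memLp_dual γ L _ hp2)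

theorem tendsto_cos_pow (t : ℝ) :
    Tendsto (fun n : ℕ => Real.cos (t / √n) ^ n) atTop (𝓝 (Real.exp (-t ^ 2 / 2))) := by
  have h0 : Tendsto (fun n : ℕ => t / √n) atTop (𝓝 0) :=
    tendsto_const_nhds.div_atTop (Real.tendsto_sqrt_atTop.comp tendsto_natCast_atTop_atTop)
  -- `n (cos (t / √n) - 1) = -(t² / 2) sinc (t / (2 √n))²` for `n > 0`.
  have h1 : Tendsto (fun n : ℕ => -t ^ 2 / 2 * Real.sinc (t / √n / 2) ^ 2) atTop
      (𝓝 (-t ^ 2 / 2)) := by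
    have := ((Real.continuous_sinc.tendsto 0).comp
      (by simpa using h0.div_const 2 : Tendsto (fun n : ℕ => t / √n / 2) atTop (𝓝 0)))
    simpa using (this.pow 2).const_mul (-t ^ 2 / 2)
  have h2 : Tendsto (fun n : ℕ => n * (Real.cos (t / √n) - 1)) atTop (𝓝 (-t ^ 2 / 2)) := by
    refine h1.congr' ?_
    filter_upwards [eventually_gt_atTop 0] with n hn
    have hn' : (0 : ℝ) < n := by exact_mod_cast hn
    have hs : √(n : ℝ) ^ 2 = n := Real.sq_sqrt hn'.le
    have hs0 : √(n : ℝ) ≠ 0 := (Real.sqrt_pos.2 hn').ne'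
    have hc : Real.cos (t / √n) = 1 - 2 * Real.sin (t / √n / 2) ^ 2 := by
      have := Real.cos_two_mul' (t / √n / 2)
      rw [mul_div_cancel₀ _ two_ne_zero] at this
      rw [this]
      linarith [Real.sin_sq_add_cos_sq (t / √n / 2)]
    rcases eq_or_ne t 0 with rfl | ht
    · simp
    rw [hc, Real.sinc_of_ne_zero (by positivity)]
    field_simp
    rw [hs]
    ring
  simpa using Real.tendsto_one_add_pow_exp_of_tendsto h2
end

/-! ### The central limit theorem for random signs -/

section
open Filter Topology

/-- `n` copies of `eᵢ / √n` for each coordinate `i < d`, so that `law (signs d n)` is the law of a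
normalised sum of `n` independent uniform points of `{±1}^d`. -/
noncomputable def signs (d n : ℕ) : List (EuclideanSpace ℝ (Fin d)) :=
  (List.finRange d).flatMap fun i => List.replicate n (EuclideanSpace.single i (1 / √n))

theorem tendsto_law (d : ℕ) :
    Tendsto (β := ProbabilityMeasure (EuclideanSpace ℝ (Fin d)))
      (fun n => ⟨law (signs d n), law_prob _⟩) atTop
      (𝓝 ⟨ProbabilityTheory.stdGaussian (EuclideanSpace ℝ (Fin d)), inferInstance⟩) := by
  refine ProbabilityMeasure.tendsto_iff_tendsto_charFun.2 fun t => ?_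
  show Tendsto (fun n => charFun (law (signs d n)) t) atTop
    (𝓝 (charFun (ProbabilityTheory.stdGaussian (EuclideanSpace ℝ (Fin d))) t))
  have h1 : ∀ n, charFun (law (signs d n)) t = ((∏ i, Real.cos (t i / √n) ^ n : ℝ) : ℂ) := by
    intro n
    rw [law_charFun, signs, List.map_flatMap, List.flatMap_def, List.prod_flatten, List.map_map,
      ← Fin.prod_univ_def]
    simp [div_eq_mul_inv, mul_comm, EuclideanSpace.inner_single_left]
  have h2 : Complex.exp (-‖t‖ ^ 2 / 2) = ((∏ i, Real.exp (-t i ^ 2 / 2) : ℝ) : ℂ) := by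
    rw [← Real.exp_sum, ← Finset.sum_div, Finset.sum_neg_distrib,
      ← EuclideanSpace.real_norm_sq_eq]
    push_cast
    rfl
  simp only [h1, charFun_stdGaussian, h2]
  exact (Complex.continuous_ofReal.tendsto _).comp
    (tendsto_finsetProd _ fun i _ => tendsto_cos_pow (t i))

theorem law_signs_sq (d n : ℕ) (L : EuclideanSpace ℝ (Fin d) →L[ℝ] ℝ) :
    ∫ x, L x ^ 2 ∂(law (signs d n)) ≤ ∑ i, L (EuclideanSpace.single i 1) ^ 2 := by
  have e : ∀ i : Fin d, (EuclideanSpace.single i (1 / √n) : EuclideanSpace ℝ (Fin d))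
      = (1 / √n : ℝ) • EuclideanSpace.single i (1 : ℝ) := fun i => by
    ext j; simp
  rw [law_sq, signs, List.map_flatMap, List.flatMap_def, List.sum_flatten, List.map_map,
    ← Fin.sum_univ_def]
  simp only [Function.comp_def, List.map_replicate, List.sum_replicate, e, map_smul, smul_eq_mul, nsmul_eq_mul]
  refine Finset.sum_le_sum fun i _ => ?_
  rw [mul_pow, ← mul_assoc, div_pow, Real.sq_sqrt n.cast_nonneg]
  refine mul_le_of_le_one_left (sq_nonneg _) ?_
  rw [one_pow, mul_one_div]
  exact div_self_le_one _

/-! ### Polynomials in coordinates and the theorem -/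

theorem polyDegLE_monomial {d : ℕ} (m : ℕ) : ∀ s : Fin d →₀ ℕ, (s.sum fun _ e => e) = m →
    ∀ a : ℝ, PolyDegLE m fun x : EuclideanSpace ℝ (Fin d) =>
      MvPolynomial.eval x.ofLp (MvPolynomial.monomial s a) := by
  induction m with
  | zero =>
    intro s hs a
    obtain rfl : s = 0 := by
      ext i
      by_contra hi
      exact hi (Finset.sum_eq_zero_iff.1 hs i (Finsupp.mem_support_iff.2 hi))
    simpa using PolyDegLE.const a
  | succ m ih =>
    intro s hs a
    obtain ⟨i, hi⟩ : ∃ i, s i ≠ 0 := by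
      by_contra! h
      simp [Finsupp.sum, h] at hs
    obtain ⟨t, rfl⟩ : ∃ t, s = Finsupp.single i 1 + t :=
      exists_add_of_le (Finsupp.single_le_iff.2 (Nat.one_le_iff_ne_zero.2 hi))
    rw [Finsupp.sum_add_index' (fun _ => rfl) (fun _ _ _ => rfl),
      Finsupp.sum_single_index rfl] at hs
    have h := (ih t (by omega) a).mul (EuclideanSpace.proj i)
    convert! h using 2
    simp [MvPolynomial.monomial_single_add]

theorem polyDegLE_eval {d : ℕ} {p : MvPolynomial (Fin d) ℝ} {k : ℕ} (hp : p.totalDegree ≤ k) :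
    PolyDegLE k fun x : EuclideanSpace ℝ (Fin d) => MvPolynomial.eval x.ofLp p := by
  have hsum : ∀ (S : Finset (Fin d →₀ ℕ)), (∀ s ∈ S, (s.sum fun _ e => e) ≤ k) →
      PolyDegLE k fun x : EuclideanSpace ℝ (Fin d) =>
        MvPolynomial.eval x.ofLp (∑ s ∈ S, MvPolynomial.monomial s (p.coeff s)) := by
    intro S
    induction S using Finset.induction_on with
    | empty => intro _; simpa using PolyDegLE.const' k (0 : ℝ)
    | insert s S hs ih =>
      intro h
      simp only [Finset.sum_insert hs, map_add]
      refine PolyDegLE.add ?_ (ih fun t ht => h t (Finset.mem_insert_of_mem ht))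
      have hk := h s (Finset.mem_insert_self _ _)
      refine PolyDegLE.mono hk ?_
      generalize p.coeff s = a
      exact polyDegLE_monomial _ s rfl a
  rw [p.as_sum]
  exact hsum _ fun s hs => (MvPolynomial.le_totalDegree hs).trans hp

/-- **Gaussian hypercontractivity for low-degree polynomials.**
For any polynomial `f : ℝ^d → ℝ` of degree at most `ℓ` and any real `q ≥ 2`,
`‖f‖_{L^q(γ_d)}^2 ≤ (q-1)^ℓ ‖f‖_{L^2(γ_d)}^2`. -/
theorem gaussian_hypercontractivity (ℓ d : ℕ) (p : MvPolynomial (Fin d) ℝ)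
    (hp : p.totalDegree ≤ ℓ) (q : ℝ) (hq : 2 ≤ q) :
    (∫ x, |MvPolynomial.eval x p| ^ q ∂(stdGaussian d)) ^ (2 / q)
      ≤ (q - 1) ^ ℓ * ∫ x, (MvPolynomial.eval x p) ^ 2 ∂(stdGaussian d) := by
  have hP := polyDegLE_eval hp
  have hq0 : 0 < q := by linarith
  obtain ⟨C, hC⟩ := bounded_sq (μ := fun n => law (signs d n)) (fun n => law_allInt _)
    (fun n => law_hyper (by norm_num) _) (fun L => ⟨_, fun n => law_signs_sq d n L⟩) hP
  have hmem := hP.memLp (γ := ProbabilityTheory.stdGaussian (EuclideanSpace ℝ (Fin d)))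
  have hiq : Integrable (fun x => |MvPolynomial.eval x.ofLp p| ^ q)
      (ProbabilityTheory.stdGaussian (EuclideanSpace ℝ (Fin d))) := by
    have := (hmem (ENNReal.ofReal q) ENNReal.ofReal_ne_top).integrable_norm_rpow
      (by simpa using hq0) ENNReal.ofReal_ne_top
    simpa [ENNReal.toReal_ofReal hq0.le] using this
  have hC4 : ∀ n, ∫ x, MvPolynomial.eval x.ofLp p ^ 4 ∂(law (signs d n)) ≤ (3 ^ ℓ * C) ^ 2 :=
    fun n => ((law_hyper (by norm_num) (signs d n)).four hP).trans
      (pow_le_pow_left₀ (mul_nonneg (by positivity) (integral_nonneg fun x => sq_nonneg _))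
        (mul_le_mul_of_nonneg_left (hC n) (by positivity)) 2)
  have key := hyper_limit (tendsto_law d) (fun n => law_allInt _) hP.continuous hq0
    (pow_nonneg (show 0 ≤ q - 1 by linarith) ℓ) hC4 (hmem 2 (by simp)).integrable_sq hiq
    fun n => law_hyper hq (signs d n) ℓ _ hP
  -- The product measure is the image of the Gaussian on `EuclideanSpace` under the identity map.
  have hmap : ∀ F : (Fin d → ℝ) → ℝ, ∫ x, F x ∂(stdGaussian d) =
      ∫ x, F x.ofLp ∂(ProbabilityTheory.stdGaussian (EuclideanSpace ℝ (Fin d))) := by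
    intro F
    rw [← map_pi_eq_stdGaussian, ← MeasurableEquiv.coe_toLp, integral_map_equiv]
    rfl
  rw [hmap, hmap]
  exact key
end
end
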